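/- arXiv:2406.05280 — 3 statements merged into one kernel-verified Lean document; each statement's English description precedes it below -/
import Mathlib

section
/- There exists a numerical constant C > 0 with the following property. Let T > 0 and let (g(t))_{t∈[0,T]} be a family of finite nonnegative Borel measures on [0,∞) such that: (a) g(t)([0,∞)) = g(0)([0,∞)) for all t ∈ [0,T]; (b) g(t)({0}) = 0 for all t ∈ [0,T]; (c) for every ε > 0 the integrand of 𝒦(φ_ε, g(τ)) is g(τ)⊗g(τ)⊗g(τ)-integrable for each τ, the map τ ↦ 𝒦(φ_ε, g(τ)) is integrable on [0,T], and N₀(g(t),ε) − N₀(g(s),ε) = ∫_s^t 𝒦(φ_ε, g(τ)) dτ for all 0 ≤ s < t ≤ T. Then either \underline{N}_{1/2}(g(0)) = 0 or \overline{N}_{1/2}(g(0)) ≤ C / (T · \underline{N}_{1/2}(g(0))). -/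
open MeasureTheory Set
open scoped ENNReal

/-- The truncated quadratic test function `φ_ε`. -/
noncomputable def phiEps (ε x : ℝ) : ℝ := if x ≤ ε then (1 - x / ε) ^ 2 else 0

/-- `N₀(g,ε) = ∫_{[0,ε]} (1 - x/ε)² dg(x)` (real valued, for finite measures). -/
noncomputable def N0 (g : Measure ℝ) (ε : ℝ) : ℝ := ∫ x in Icc (0:ℝ) ε, (1 - x / ε) ^ 2 ∂g

/-- `N₀(g,ε)` valued in `[0,∞]`. -/
noncomputable def N0e (g : Measure ℝ) (ε : ℝ) : ℝ≥0∞ :=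
  ∫⁻ x in Icc (0:ℝ) ε, ENNReal.ofReal ((1 - x / ε) ^ 2) ∂g

/-- `N_α(g,ε) = ε^{-α} N₀(g,ε)`, valued in `[0,∞]`. -/
noncomputable def NalphaE (g : Measure ℝ) (α ε : ℝ) : ℝ≥0∞ :=
  ENNReal.ofReal (ε ^ (-α)) * N0e g ε

/-- `\underline{N}_α(g,ε) = inf_{0 < δ ≤ ε} N_α(g,δ)`. -/
noncomputable def uNe (g : Measure ℝ) (α ε : ℝ) : ℝ≥0∞ := ⨅ δ ∈ Ioc (0:ℝ) ε, NalphaE g α δ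

/-- `\overline{N}_α(g,ε) = sup_{0 < δ ≤ ε} N_α(g,δ)`. -/
noncomputable def oNe (g : Measure ℝ) (α ε : ℝ) : ℝ≥0∞ := ⨆ δ ∈ Ioc (0:ℝ) ε, NalphaE g α δ

/-- `\underline{N}_α(g) = lim_{ε→0⁺} \underline{N}_α(g,ε)`, a monotone limit in `[0,∞]`. -/
noncomputable def uNlim (g : Measure ℝ) (α : ℝ) : ℝ≥0∞ := ⨆ ε ∈ Ioi (0:ℝ), uNe g α ε

/-- `\overline{N}_α(g) = lim_{ε→0⁺} \overline{N}_α(g,ε)`, a monotone limit in `[0,∞]`. -/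
noncomputable def oNlim (g : Measure ℝ) (α : ℝ) : ℝ≥0∞ := ⨅ ε ∈ Ioi (0:ℝ), oNe g α ε

/-- The integrand of the collision functional `𝒦(φ_ε, g)` of the 4-wave kinetic equation,
with `Φ = min{√ω₁, √ω₂, √ω₃, √((ω₁+ω₂-ω₃)₊)}`. -/
noncomputable def wkeKernel (ε : ℝ) (ω : ℝ × ℝ × ℝ) : ℝ :=
  (min (Real.sqrt ω.1) (min (Real.sqrt ω.2.1) (min (Real.sqrt ω.2.2)
      (Real.sqrt (max (ω.1 + ω.2.1 - ω.2.2) 0)))) /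
    (Real.sqrt ω.1 * Real.sqrt ω.2.1 * Real.sqrt ω.2.2)) *
  (phiEps ε (max (ω.1 + ω.2.1 - ω.2.2) 0) + phiEps ε ω.2.2 - phiEps ε ω.1 - phiEps ε ω.2.1)

/-- The collision functional `𝒦(φ_ε, g)` as a triple integral over `(0,∞)³` against `g⊗g⊗g`. -/
noncomputable def Kcoll (g : Measure ℝ) (ε : ℝ) : ℝ :=
  ∫ ω in (Ioi (0:ℝ)) ×ˢ ((Ioi (0:ℝ)) ×ˢ (Ioi (0:ℝ))), wkeKernel ε ω ∂(g.prod (g.prod g))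


lemma phi_eq (ε x : ℝ) (hε : 0 < ε) : phiEps ε x = (max (1 - x / ε) 0) ^ 2 := by
  unfold phiEps
  split_ifs with h
  · rw [max_eq_left]
    have : x / ε ≤ 1 := (div_le_one hε).2 h
    linarith
  · rw [max_eq_right]
    · simp
    have : 1 ≤ x / ε := (one_le_div hε).2 (le_of_not_ge h)
    linarith

lemma P_conv (a b h : ℝ) (hab : b ≤ a) (hh : 0 ≤ h) :
    (max a 0) ^ 2 + (max b 0) ^ 2 ≤ (max (a + h) 0) ^ 2 + (max (b - h) 0) ^ 2 := by
  rcases le_total a 0 with ha | ha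
  · have hb : b ≤ 0 := hab.trans ha
    rw [max_eq_right ha, max_eq_right hb]
    nlinarith [sq_nonneg (max (a + h) 0), sq_nonneg (max (b - h) 0)]
  · rw [max_eq_left ha, max_eq_left (by linarith : 0 ≤ a + h)]
    rcases le_total b 0 with hb | hb
    · rw [max_eq_right hb]
      nlinarith [sq_nonneg (max (b - h) 0), mul_nonneg ha hh]
    · rw [max_eq_left hb]
      rcases le_total (b - h) 0 with hc | hc
      · rw [max_eq_right hc]
        nlinarith [mul_nonneg ha hh]
      · rw [max_eq_left hc]
        nlinarith [mul_nonneg hh (sub_nonneg.2 hab)]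

lemma P_second (u h : ℝ) (hu : 0 ≤ u) (hh : 0 ≤ h) :
    2 * (max u 0) ^ 2 + h ^ 2 ≤ (max (u + h) 0) ^ 2 + (max (u - h) 0) ^ 2 := by
  rw [max_eq_left hu, max_eq_left (by linarith : 0 ≤ u + h)]
  rcases le_total (u - h) 0 with hc | hc
  · rw [max_eq_right hc]
    nlinarith [mul_nonneg hu hh]
  · rw [max_eq_left hc]
    nlinarith

lemma phi_conv (ε x y h : ℝ) (hε : 0 < ε) (hxy : x ≤ y) (hh : 0 ≤ h) :
    phiEps ε x + phiEps ε y ≤ phiEps ε (x - h) + phiEps ε (y + h) := by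
  rw [phi_eq _ _ hε, phi_eq _ _ hε, phi_eq _ _ hε, phi_eq _ _ hε]
  have := P_conv (1 - x / ε) (1 - y / ε) (h / ε)
    (by have := div_le_div_of_nonneg_right hxy hε.le; linarith) (by positivity)
  convert this using 3 <;> (congr 1; ring)

lemma phi_second (ε z h : ℝ) (hε : 0 < ε) (hz : z ≤ ε) (hh : 0 ≤ h) :
    2 * phiEps ε z + (h / ε) ^ 2 ≤ phiEps ε (z - h) + phiEps ε (z + h) := by
  rw [phi_eq _ _ hε, phi_eq _ _ hε, phi_eq _ _ hε]
  have := P_second (1 - z / ε) (h / ε)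
    (by have := (div_le_one hε).2 hz; linarith) (by positivity)
  convert this using 3 <;> (congr 1; ring)

noncomputable def kerF (ε x y z : ℝ) : ℝ :=
  wkeKernel ε (x, y, z) + wkeKernel ε (y, z, x) + wkeKernel ε (z, x, y)

lemma wke_symm (ε x y z : ℝ) : wkeKernel ε (x, y, z) = wkeKernel ε (y, x, z) := by
  unfold wkeKernel
  simp only
  rw [min_left_comm, add_comm x y, mul_comm (Real.sqrt x)]
  ring

lemma kerF_rot (ε x y z : ℝ) : kerF ε x y z = kerF ε y z x := by
  unfold kerF; ring

lemma kerF_swap (ε x y z : ℝ) : kerF ε x y z = kerF ε y x z := by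
  unfold kerF
  rw [wke_symm ε x y z, wke_symm ε y z x, wke_symm ε z x y]; ring

/-- ordered lower bound -/
lemma kerF_ord (ε x y z : ℝ) (hε : 0 < ε) (hx : 0 < x) (hxy : x ≤ y) (hyz : y ≤ z) :
    1 / (Real.sqrt y * Real.sqrt z) *
      (phiEps ε (z - (y - x)) + phiEps ε (z + (y - x)) - 2 * phiEps ε z) ≤ kerF ε x y z := by
  have hy : 0 < y := hx.trans_le hxy
  have hz : 0 < z := hy.trans_le hyz
  have h1 : 0 ≤ wkeKernel ε (x, y, z) := by
    unfold wkeKernel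
    simp only
    rcases le_total (x + y - z) 0 with h | h
    · rw [max_eq_right h]
      simp [Real.sqrt_nonneg]
    · rw [max_eq_left h]
      apply mul_nonneg (by positivity)
      have := phi_conv ε x y (z - y) hε hxy (by linarith)
      have e1 : x - (z - y) = x + y - z := by ring
      have e2 : y + (z - y) = z := by ring
      rw [e1, e2] at this
      linarith
  have sx := Real.sqrt_pos.2 hx
  have sy := Real.sqrt_pos.2 hy
  have sz := Real.sqrt_pos.2 hz
  have sxy := Real.sqrt_le_sqrt hxy
  have syz := Real.sqrt_le_sqrt hyz
  have h2 : wkeKernel ε (y, z, x) = 1 / (Real.sqrt y * Real.sqrt z) *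
      (phiEps ε (z + (y - x)) + phiEps ε x - phiEps ε y - phiEps ε z) := by
    unfold wkeKernel
    simp only
    rw [max_eq_left (by linarith : 0 ≤ y + z - x)]
    have : Real.sqrt x ≤ Real.sqrt (y + z - x) := Real.sqrt_le_sqrt (by linarith)
    rw [min_eq_left this, min_eq_right (sxy.trans syz), min_eq_right sxy]
    have e : y + z - x = z + (y - x) := by ring
    rw [e]
    congr 1
    field_simp
  have h3 : wkeKernel ε (z, x, y) = 1 / (Real.sqrt y * Real.sqrt z) *
      (phiEps ε (z - (y - x)) + phiEps ε y - phiEps ε z - phiEps ε x) := by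
    unfold wkeKernel
    simp only
    rw [max_eq_left (by linarith : 0 ≤ z + x - y)]
    have : Real.sqrt x ≤ Real.sqrt (z + x - y) := Real.sqrt_le_sqrt (by linarith)
    rw [min_eq_left (le_min sxy this), min_eq_right (sxy.trans syz)]
    have e : z + x - y = z - (y - x) := by ring
    rw [e]
    congr 1
    field_simp
  unfold kerF
  rw [h2, h3]
  linarith

lemma kerF_ord_nonneg (ε x y z : ℝ) (hε : 0 < ε) (hx : 0 < x) (hxy : x ≤ y) (hyz : y ≤ z) :
    0 ≤ kerF ε x y z := by
  refine le_trans ?_ (kerF_ord ε x y z hε hx hxy hyz)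
  apply mul_nonneg (by positivity)
  have := phi_conv ε z z (y - x) hε le_rfl (by linarith)
  linarith

lemma kerF_nonneg (ε x y z : ℝ) (hε : 0 < ε) (hx : 0 < x) (hy : 0 < y) (hz : 0 < z) :
    0 ≤ kerF ε x y z := by
  rcases le_total x y with h1 | h1 <;> rcases le_total y z with h2 | h2 <;>
    rcases le_total x z with h3 | h3
  · exact kerF_ord_nonneg ε x y z hε hx h1 h2
  · exact kerF_ord_nonneg ε x y z hε hx h1 h2
  · rw [kerF_swap, kerF_rot]; exact kerF_ord_nonneg ε _ _ _ hε hx h3 h2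
  · rw [kerF_rot, kerF_rot]; exact kerF_ord_nonneg ε _ _ _ hε hz h3 h1
  · rw [kerF_swap]; exact kerF_ord_nonneg ε _ _ _ hε hy h1 h3
  · rw [kerF_rot]; exact kerF_ord_nonneg ε _ _ _ hε hy h2 h3
  · rw [kerF_rot, kerF_swap]; exact kerF_ord_nonneg ε _ _ _ hε hz h2 h1
  · rw [kerF_rot, kerF_swap]; exact kerF_ord_nonneg ε _ _ _ hε hz h2 h1

lemma kerF_lower_aux (ε x y z : ℝ) (hε : 0 < ε) (hx : 0 < x) (hx' : x ≤ ε / 64)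
    (hy : ε / 16 < y) (hyz : y ≤ z) (hz' : z ≤ ε) :
    9 / 4096 / ε ≤ kerF ε x y z := by
  have hy0 : 0 < y := by linarith
  have hz0 : 0 < z := by linarith
  refine le_trans ?_ (kerF_ord ε x y z hε hx (by linarith) hyz)
  have h1 := phi_second ε z (y - x) hε hz' (by linarith)
  have h2 : 3 / 64 ≤ (y - x) / ε := by
    rw [le_div_iff₀ hε]; linarith
  have h3 : (9:ℝ) / 4096 ≤ ((y - x) / ε) ^ 2 := by nlinarith
  have h4 : 1 / ε ≤ 1 / (Real.sqrt y * Real.sqrt z) := by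
    apply one_div_le_one_div_of_le (by positivity)
    have a1 := Real.sqrt_le_sqrt (hyz.trans hz')
    have a2 := Real.sqrt_le_sqrt hz'
    calc Real.sqrt y * Real.sqrt z ≤ Real.sqrt ε * Real.sqrt ε := by gcongr
      _ = ε := Real.mul_self_sqrt hε.le
  calc 9 / 4096 / ε = 1 / ε * (9 / 4096) := by ring
    _ ≤ _ := by
      apply mul_le_mul h4 (by linarith) (by norm_num) (by positivity)

lemma kerF_lower (ε x y z : ℝ) (hε : 0 < ε) (hx : x ∈ Ioc 0 (ε / 64))
    (hy : y ∈ Ioc (ε / 16) ε) (hz : z ∈ Ioc (ε / 16) ε) :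
    9 / 4096 / ε ≤ kerF ε x y z := by
  rcases le_total y z with h | h
  · exact kerF_lower_aux ε x y z hε hx.1 hx.2 hy.1 h hz.2
  · rw [kerF_swap, kerF_rot]
    exact kerF_lower_aux ε x z y hε hx.1 hx.2 hz.1 h hy.2

lemma K_lower (g : Measure ℝ) [IsFiniteMeasure g] (ε : ℝ) (hε : 0 < ε)
    (hint : Integrable (wkeKernel ε) ((g.prod (g.prod g)).restrict
          ((Ioi (0:ℝ)) ×ˢ ((Ioi (0:ℝ)) ×ˢ (Ioi (0:ℝ)))))) :
    9 / 4096 / ε * (g.real (Ioc 0 (ε / 64)) * g.real (Ioc (ε / 16) ε) ^ 2) ≤ 3 * Kcoll g ε := by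
  unfold Kcoll
  rw [← Measure.prod_restrict, ← Measure.prod_restrict] at hint ⊢
  set G := g.restrict (Ioi (0:ℝ)) with hG
  have mp : MeasurePreserving (fun p : ℝ × ℝ × ℝ => (p.2.1, p.2.2, p.1))
      (G.prod (G.prod G)) (G.prod (G.prod G)) :=
    (measurePreserving_prodAssoc G G G).comp (Measure.measurePreserving_swap (μ := G) (ν := G.prod G))
  have me : MeasurableEmbedding (fun p : ℝ × ℝ × ℝ => (p.2.1, p.2.2, p.1)) :=
    (MeasurableEquiv.prodAssoc (α := ℝ) (β := ℝ) (γ := ℝ)).measurableEmbedding.comp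
      (MeasurableEquiv.prodComm (α := ℝ) (β := ℝ × ℝ)).measurableEmbedding
  have i2 : Integrable (fun p : ℝ × ℝ × ℝ => wkeKernel ε (p.2.1, p.2.2, p.1)) (G.prod (G.prod G)) :=
    mp.integrable_comp_of_integrable hint
  have i3 : Integrable (fun p : ℝ × ℝ × ℝ => wkeKernel ε (p.2.2, p.1, p.2.1)) (G.prod (G.prod G)) :=
    mp.integrable_comp_of_integrable i2
  have e2 : ∫ p, wkeKernel ε (p.2.1, p.2.2, p.1) ∂(G.prod (G.prod G)) =
      ∫ p, wkeKernel ε p ∂(G.prod (G.prod G)) := mp.integral_comp me _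
  have e3 : ∫ p, wkeKernel ε (p.2.2, p.1, p.2.1) ∂(G.prod (G.prod G)) =
      ∫ p, wkeKernel ε (p.2.1, p.2.2, p.1) ∂(G.prod (G.prod G)) :=
    mp.integral_comp me (fun p : ℝ × ℝ × ℝ => wkeKernel ε (p.2.1, p.2.2, p.1))
  have iF : Integrable (fun p : ℝ × ℝ × ℝ => kerF ε p.1 p.2.1 p.2.2) (G.prod (G.prod G)) :=
    (hint.add i2).add i3
  have e : 3 * ∫ p, wkeKernel ε p ∂(G.prod (G.prod G)) =
      ∫ p, kerF ε p.1 p.2.1 p.2.2 ∂(G.prod (G.prod G)) := by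
    have : ∫ p, kerF ε p.1 p.2.1 p.2.2 ∂(G.prod (G.prod G)) =
      ∫ p, wkeKernel ε p ∂(G.prod (G.prod G)) +
      ∫ p, wkeKernel ε (p.2.1, p.2.2, p.1) ∂(G.prod (G.prod G)) +
      ∫ p, wkeKernel ε (p.2.2, p.1, p.2.1) ∂(G.prod (G.prod G)) := by
      rw [← integral_add hint i2]
      exact integral_add (hint.add i2) i3
    rw [this, e3, e2]; ring
  rw [e]
  set S : Set (ℝ × ℝ × ℝ) := Ioc 0 (ε / 64) ×ˢ (Ioc (ε / 16) ε ×ˢ Ioc (ε / 16) ε) with hS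
  have mS : MeasurableSet S := measurableSet_Ioc.prod (measurableSet_Ioc.prod measurableSet_Ioc)
  have hGr : ∀ a b : ℝ, 0 ≤ a → G.real (Ioc a b) = g.real (Ioc a b) := by
    intro a b ha
    rw [hG, measureReal_restrict_apply measurableSet_Ioc, inter_eq_left.2]
    intro x hx
    exact ha.trans_lt hx.1
  have hm : (G.prod (G.prod G)).real S =
      g.real (Ioc 0 (ε / 64)) * g.real (Ioc (ε / 16) ε) ^ 2 := by
    rw [hS, measureReal_prod_prod, measureReal_prod_prod, hGr _ _ le_rfl,
      hGr _ _ (by positivity)]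
    ring
  have hi : ∫ p, S.indicator (fun _ => 9 / 4096 / ε) p ∂(G.prod (G.prod G)) =
      9 / 4096 / ε * (g.real (Ioc 0 (ε / 64)) * g.real (Ioc (ε / 16) ε) ^ 2) := by
    rw [integral_indicator_const _ mS, hm, smul_eq_mul, mul_comm]
  rw [← hi]
  apply integral_mono_ae _ iF
  · have hpos : ∀ᵐ p ∂(G.prod (G.prod G)), p ∈ (Ioi (0:ℝ)) ×ˢ ((Ioi (0:ℝ)) ×ˢ (Ioi (0:ℝ))) := by
      rw [hG, Measure.prod_restrict, Measure.prod_restrict]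
      exact ae_restrict_mem (measurableSet_Ioi.prod (measurableSet_Ioi.prod measurableSet_Ioi))
    filter_upwards [hpos] with p hp
    by_cases h : p ∈ S
    · rw [indicator_of_mem h]
      exact kerF_lower ε _ _ _ hε h.1 h.2.1 h.2.2
    · rw [indicator_of_notMem h]
      exact kerF_nonneg ε _ _ _ hε hp.1 hp.2.1 hp.2.2
  · exact (integrable_const _).indicator mS

lemma N0_integrable (g : Measure ℝ) [IsFiniteMeasure g] (ε : ℝ) (_hε : 0 < ε) :
    IntegrableOn (fun x => (1 - x / ε) ^ 2) (Icc 0 ε) g := by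
  apply ContinuousOn.integrableOn_compact isCompact_Icc
  fun_prop

lemma N0_le (g : Measure ℝ) [IsFiniteMeasure g] (h0 : g {0} = 0) (ε : ℝ) (hε : 0 < ε) :
    N0 g ε ≤ g.real (Ioc 0 ε) := by
  have h1 : N0 g ε ≤ ∫ x in Icc (0:ℝ) ε, (1:ℝ) ∂g := by
    apply setIntegral_mono_on (N0_integrable g ε hε) (by simp) measurableSet_Icc
    intro x hx
    have : x / ε ≤ 1 := (div_le_one hε).2 hx.2
    have : 0 ≤ x / ε := div_nonneg hx.1 hε.le
    nlinarith
  have h2 : g.real (Icc 0 ε) ≤ g.real (Ioc 0 ε) := by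
    have : Icc 0 ε = {0} ∪ Ioc 0 ε := by
      rw [← Ioc_insert_left hε.le]; rfl
    rw [this]
    refine (measureReal_union_le _ _).trans ?_
    simp [measureReal_def, h0]
  simpa using h1.trans (by simpa using h2)

lemma N0_nonneg (g : Measure ℝ) (ε : ℝ) : 0 ≤ N0 g ε :=
  integral_nonneg fun _ => sq_nonneg _

lemma N0_mono (g : Measure ℝ) [IsFiniteMeasure g] (δ ε : ℝ) (hδ : 0 < δ) (h : δ ≤ ε) :
    N0 g δ ≤ N0 g ε := by
  have hε := hδ.trans_le h
  calc N0 g δ ≤ ∫ x in Icc (0:ℝ) δ, (1 - x / ε) ^ 2 ∂g := by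
        apply setIntegral_mono_on (N0_integrable g δ hδ)
          ((N0_integrable g ε hε).mono_set (Icc_subset_Icc_right h)) measurableSet_Icc
        intro x hx
        have h1 : x / δ ≤ 1 := (div_le_one hδ).2 hx.2
        have h2 : x / ε ≤ x / δ := div_le_div_of_nonneg_left hx.1 hδ h
        apply pow_le_pow_left₀ <;> linarith
    _ ≤ N0 g ε := by
        apply setIntegral_mono_set (N0_integrable g ε hε)
        · exact Filter.Eventually.of_forall fun _ => sq_nonneg _
        · exact (Icc_subset_Icc_right h).eventuallyLE

lemma K_nonneg (g : Measure ℝ) [IsFiniteMeasure g] (ε : ℝ) (hε : 0 < ε)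
    (hint : Integrable (wkeKernel ε) ((g.prod (g.prod g)).restrict
          ((Ioi (0:ℝ)) ×ˢ ((Ioi (0:ℝ)) ×ˢ (Ioi (0:ℝ)))))) : 0 ≤ Kcoll g ε := by
  have := K_lower g ε hε hint
  have h : 0 ≤ 9 / 4096 / ε * (g.real (Ioc 0 (ε / 64)) * g.real (Ioc (ε / 16) ε) ^ 2) := by
    positivity
  linarith

lemma K_lower' (g : Measure ℝ) [IsFiniteMeasure g] (h0 : g {0} = 0) (ε A : ℝ) (hε : 0 < ε)
    (hN : A * (Real.sqrt ε / 8) ≤ N0 g (ε / 64))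
    (hint : Integrable (wkeKernel ε) ((g.prod (g.prod g)).restrict
          ((Ioi (0:ℝ)) ×ˢ ((Ioi (0:ℝ)) ×ˢ (Ioi (0:ℝ)))))) :
    3 / 32768 * A / Real.sqrt ε * g.real (Ioc (ε / 16) ε) ^ 2 ≤ Kcoll g ε := by
  have h1 := K_lower g ε hε hint
  have h2 := hN.trans (N0_le g h0 (ε / 64) (by positivity))
  have h3 : 9 / 4096 / ε * (A * (Real.sqrt ε / 8) * g.real (Ioc (ε / 16) ε) ^ 2) ≤
      9 / 4096 / ε * (g.real (Ioc 0 (ε / 64)) * g.real (Ioc (ε / 16) ε) ^ 2) := by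
    gcongr
  have h4 : 9 / 4096 / ε * (A * (Real.sqrt ε / 8) * g.real (Ioc (ε / 16) ε) ^ 2) =
      3 * (3 / 32768 * A / Real.sqrt ε * g.real (Ioc (ε / 16) ε) ^ 2) := by
    have sp := Real.sqrt_pos.2 hε
    have : 1 / ε = 1 / Real.sqrt ε * (1 / Real.sqrt ε) := by
      rw [div_mul_div_comm, Real.mul_self_sqrt hε.le, one_mul]
    calc _ = 9 / 4096 * (1 / ε) * (A * (Real.sqrt ε / 8) * g.real (Ioc (ε / 16) ε) ^ 2) := by ring
      _ = _ := by rw [this]; field_simp; ring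
  linarith

lemma sum_lower (g : Measure ℝ) [IsFiniteMeasure g] (h0 : g {0} = 0) (ε A : ℝ) (hε : 0 < ε)
    (hA : 0 ≤ A)
    (hN : ∀ δ, 0 < δ → δ ≤ ε → A * Real.sqrt δ ≤ N0 g δ)
    (hint : ∀ ε, 0 < ε → Integrable (wkeKernel ε) ((g.prod (g.prod g)).restrict
          ((Ioi (0:ℝ)) ×ˢ ((Ioi (0:ℝ)) ×ˢ (Ioi (0:ℝ)))))) (n : ℕ) :
    3 / 65536 * A / Real.sqrt ε * (g.real (Ioc 0 ε) - g.real (Ioc 0 (ε / 16 ^ n))) ^ 2 ≤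
      ∑ k ∈ Finset.range n, (1 / 2) ^ k * Kcoll g (ε / 16 ^ k) := by
  have sp := Real.sqrt_pos.2 hε
  set p : ℕ → ℝ := fun k => g.real (Ioc (ε / 16 ^ (k+1)) (ε / 16 ^ k)) with hp
  have hpd : ∀ k, p k = g.real (Ioc 0 (ε / 16 ^ k)) - g.real (Ioc 0 (ε / 16 ^ (k+1))) := by
    intro k
    have hle : ε / 16 ^ (k+1) ≤ ε / 16 ^ k := by
      apply div_le_div_of_nonneg_left hε.le (by positivity)
      exact pow_le_pow_right₀ (by norm_num) (by omega)
    have : Ioc 0 (ε / 16 ^ k) = Ioc 0 (ε / 16 ^ (k+1)) ∪ Ioc (ε / 16 ^ (k+1)) (ε / 16 ^ k) :=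
      (Ioc_union_Ioc_eq_Ioc (by positivity) hle).symm
    rw [this, measureReal_union _ measurableSet_Ioc]
    · simp [hp]
    · exact Ioc_disjoint_Ioc_of_le le_rfl
  have hsum : ∑ k ∈ Finset.range n, p k = g.real (Ioc 0 ε) - g.real (Ioc 0 (ε / 16 ^ n)) := by
    simp_rw [hpd]
    rw [Finset.sum_range_sub' (fun k => g.real (Ioc 0 (ε / 16 ^ k)))]
    simp
  rw [← hsum]
  have hterm : ∀ k, 3 / 32768 * A / Real.sqrt ε * (p k ^ 2 / (1 / 2) ^ k) ≤
      (1 / 2) ^ k * Kcoll g (ε / 16 ^ k) := by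
    intro k
    have hs : Real.sqrt (ε / 16 ^ k) = Real.sqrt ε / 4 ^ k := by
      rw [Real.sqrt_div hε.le]
      congr 1
      rw [show (16:ℝ) ^ k = (4 ^ k) ^ 2 by rw [← pow_mul, mul_comm, pow_mul]; norm_num]
      exact Real.sqrt_sq (by positivity)
    have hpos : 0 < ε / 16 ^ k := by positivity
    have hle : ε / 16 ^ k ≤ ε := div_le_self hε.le (one_le_pow₀ (by norm_num))
    have h64 : Real.sqrt (ε / 16 ^ k / 64) = Real.sqrt (ε / 16 ^ k) / 8 := by
      rw [Real.sqrt_div hpos.le]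
      congr 1
      rw [show (64:ℝ) = 8 ^ 2 by norm_num]
      exact Real.sqrt_sq (by norm_num)
    have h1 := K_lower' g h0 (ε / 16 ^ k) A hpos
      (by rw [← h64]; exact hN _ (by positivity) (by linarith)) (hint _ hpos)
    have e : ε / 16 ^ k / 16 = ε / 16 ^ (k+1) := by rw [pow_succ]; field_simp
    rw [e, hs] at h1
    have h2 : (1 / 2 : ℝ) ^ k * (3 / 32768 * A / (Real.sqrt ε / 4 ^ k) * p k ^ 2) ≤
      (1 / 2) ^ k * Kcoll g (ε / 16 ^ k) := by
      apply mul_le_mul_of_nonneg_left h1 (by positivity)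
    refine le_trans (le_of_eq ?_) h2
    have h4 : (4:ℝ) ^ k = 2 ^ k * 2 ^ k := by rw [← mul_pow]; norm_num
    rw [h4, div_pow, one_pow]
    field_simp
  have hcs := Finset.sq_sum_div_le_sum_sq_div (Finset.range n) p
    (g := fun k => (1 / 2 : ℝ) ^ k) (fun k _ => by positivity)
  have hgeo : ∑ k ∈ Finset.range n, (1 / 2 : ℝ) ^ k ≤ 2 := sum_geometric_two_le n
  have hc2 : (∑ k ∈ Finset.range n, p k) ^ 2 / 2 ≤ ∑ k ∈ Finset.range n, p k ^ 2 / (1 / 2) ^ k := by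
    rcases Nat.eq_zero_or_pos n with rfl | hn
    · simp
    refine le_trans ?_ hcs
    apply div_le_div_of_nonneg_left (sq_nonneg _) _ hgeo
    apply Finset.sum_pos (fun k _ => by positivity)
    simpa using hn.ne'
  calc _ = 3 / 32768 * A / Real.sqrt ε * ((∑ k ∈ Finset.range n, p k) ^ 2 / 2) := by ring
    _ ≤ 3 / 32768 * A / Real.sqrt ε * ∑ k ∈ Finset.range n, p k ^ 2 / (1 / 2) ^ k := by
        gcongr
    _ = ∑ k ∈ Finset.range n, 3 / 32768 * A / Real.sqrt ε * (p k ^ 2 / (1 / 2) ^ k) := by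
        rw [Finset.mul_sum]
    _ ≤ _ := Finset.sum_le_sum fun k _ => hterm k

lemma tendsto_small (g : Measure ℝ) [IsFiniteMeasure g] (ε : ℝ) (hε : 0 < ε) :
    Filter.Tendsto (fun n : ℕ => g.real (Ioc 0 (ε / 16 ^ n))) Filter.atTop (nhds 0) := by
  have h : Filter.Tendsto (fun n : ℕ => g (Ioc 0 (ε / 16 ^ n))) Filter.atTop
      (nhds (g (⋂ n : ℕ, Ioc 0 (ε / 16 ^ n)))) := by
    apply tendsto_measure_iInter_atTop
    · exact fun n => measurableSet_Ioc.nullMeasurableSet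
    · intro a b hab
      apply Ioc_subset_Ioc_right
      apply div_le_div_of_nonneg_left hε.le (by positivity)
      exact pow_le_pow_right₀ (by norm_num) hab
    · exact ⟨0, measure_ne_top _ _⟩
  have he : (⋂ n : ℕ, Ioc 0 (ε / 16 ^ n)) = ∅ := by
    apply eq_empty_of_forall_notMem
    intro x hx
    rw [mem_iInter] at hx
    have hx0 := (hx 0).1
    obtain ⟨n, hn⟩ := pow_unbounded_of_one_lt (ε / x) (by norm_num : (1:ℝ) < 16)
    have h2 := (hx n).2
    rw [le_div_iff₀ (by positivity)] at h2
    rw [div_lt_iff₀ hx0] at hn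
    linarith
  rw [he, measure_empty] at h
  have := (ENNReal.tendsto_toReal ENNReal.zero_ne_top).comp h
  simpa [measureReal_def, Function.comp_def] using this

lemma step (T : ℝ) (g : ℝ → Measure ℝ)
    (hfin : ∀ t ∈ Icc (0:ℝ) T, IsFiniteMeasure (g t))
    (h0 : ∀ t ∈ Icc (0:ℝ) T, g t ({0} : Set ℝ) = 0)
    (hK : ∀ ε : ℝ, 0 < ε →
      (∀ τ ∈ Icc (0:ℝ) T, Integrable (wkeKernel ε)
        (((g τ).prod ((g τ).prod (g τ))).restrict
          ((Ioi (0:ℝ)) ×ˢ ((Ioi (0:ℝ)) ×ˢ (Ioi (0:ℝ)))))) ∧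
      IntegrableOn (fun τ => Kcoll (g τ) ε) (Icc (0:ℝ) T) ∧
      (∀ s t : ℝ, 0 ≤ s → s < t → t ≤ T →
        N0 (g t) ε - N0 (g s) ε = ∫ τ in s..t, Kcoll (g τ) ε))
    (hmono : ∀ ε, 0 < ε → ∀ s t, 0 ≤ s → s ≤ t → t ≤ T → N0 (g s) ε ≤ N0 (g t) ε)
    (ε A : ℝ) (hε : 0 < ε) (hA : 0 ≤ A)
    (hN : ∀ δ, 0 < δ → δ ≤ ε → A * Real.sqrt δ ≤ N0 (g 0) δ)
    (s t : ℝ) (hs : 0 ≤ s) (hst : s < t) (ht : t ≤ T) :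
    (t - s) * (3 / 131072 * A / Real.sqrt ε) * N0 (g s) ε ^ 2 ≤ N0 (g t) ε := by
  have sp := Real.sqrt_pos.2 hε
  have hsub : Ioc s t ⊆ Icc 0 T := fun x hx => ⟨hs.trans hx.1.le, hx.2.trans ht⟩
  have hE : ∀ k : ℕ, 0 < ε / 16 ^ k := fun k => by positivity
  have hEle : ∀ k : ℕ, ε / 16 ^ k ≤ ε := fun k =>
    div_le_self hε.le (one_le_pow₀ (by norm_num))
  set f : ℕ → ℝ → ℝ := fun n τ => ∑ k ∈ Finset.range n, (1 / 2) ^ k * Kcoll (g τ) (ε / 16 ^ k) with hf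
  have hKi : ∀ k : ℕ, IntegrableOn (fun τ => Kcoll (g τ) (ε / 16 ^ k)) (Ioc s t) := fun k =>
    ((hK _ (hE k)).2.1).mono_set hsub
  have hfi : ∀ n, IntegrableOn (f n) (Ioc s t) := fun n =>
    integrable_finsetSum _ fun k _ => (hKi k).const_mul _
  have hf0 : ∀ n, ∀ τ ∈ Ioc s t, 0 ≤ f n τ := by
    intro n τ hτ
    have := hfin τ (hsub hτ)
    exact Finset.sum_nonneg fun k _ => mul_nonneg (by positivity)
      (K_nonneg (g τ) _ (hE k) ((hK _ (hE k)).1 τ (hsub hτ)))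
  have htm : t ∈ Icc 0 T := ⟨hs.trans hst.le, ht⟩
  have := hfin t htm
  have hfint : ∀ n, ∫ τ in Ioc s t, f n τ ≤ 2 * N0 (g t) ε := by
    intro n
    rw [integral_finsetSum _ fun k _ => (hKi k).const_mul _]
    calc _ ≤ ∑ k ∈ Finset.range n, (1 / 2 : ℝ) ^ k * N0 (g t) ε := by
          apply Finset.sum_le_sum
          intro k _
          rw [integral_const_mul]
          apply mul_le_mul_of_nonneg_left _ (by positivity)
          rw [← intervalIntegral.integral_of_le hst.le, ← (hK _ (hE k)).2.2 s t hs hst ht]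
          have := N0_nonneg (g s) (ε / 16 ^ k)
          have := N0_mono (g t) (ε / 16 ^ k) ε (hE k) (hEle k)
          linarith
      _ = (∑ k ∈ Finset.range n, (1 / 2 : ℝ) ^ k) * N0 (g t) ε := by rw [Finset.sum_mul]
      _ ≤ 2 * N0 (g t) ε :=
          mul_le_mul_of_nonneg_right (sum_geometric_two_le n) (N0_nonneg _ _)
  have hl : ∀ n, ∫⁻ τ in Ioc s t, ENNReal.ofReal (f n τ) ≤ ENNReal.ofReal (2 * N0 (g t) ε) := by
    intro n
    rw [← ofReal_integral_eq_lintegral_ofReal (hfi n)]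
    · exact ENNReal.ofReal_le_ofReal (hfint n)
    · exact (ae_restrict_mem measurableSet_Ioc).mono fun τ hτ => hf0 n τ hτ
  set c := 3 / 65536 * A / Real.sqrt ε with hc
  have hc0 : 0 ≤ c := by positivity
  have hlim : ∀ τ ∈ Ioc s t, ENNReal.ofReal (c * N0 (g s) ε ^ 2) ≤
      Filter.liminf (fun n => ENNReal.ofReal (f n τ)) Filter.atTop := by
    intro τ hτ
    have := hfin τ (hsub hτ)
    have hm1 : N0 (g s) ε ≤ (g τ).real (Ioc 0 ε) :=
      (hmono ε hε s τ hs hτ.1.le (hτ.2.trans ht)).trans (N0_le _ (h0 τ (hsub hτ)) ε hε)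
    have ten : Filter.Tendsto (fun n : ℕ => ENNReal.ofReal
        (c * ((g τ).real (Ioc 0 ε) - (g τ).real (Ioc 0 (ε / 16 ^ n))) ^ 2)) Filter.atTop
        (nhds (ENNReal.ofReal (c * ((g τ).real (Ioc 0 ε) - 0) ^ 2))) :=
      ENNReal.tendsto_ofReal (((tendsto_const_nhds.sub (tendsto_small (g τ) ε hε)).pow 2).const_mul c)
    calc _ ≤ ENNReal.ofReal (c * ((g τ).real (Ioc 0 ε) - 0) ^ 2) := by
          apply ENNReal.ofReal_le_ofReal
          apply mul_le_mul_of_nonneg_left _ hc0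
          rw [sub_zero]
          exact pow_le_pow_left₀ (N0_nonneg _ _) hm1 2
      _ = _ := ten.liminf_eq.symm
      _ ≤ _ := by
          refine Filter.liminf_le_liminf ?_
          filter_upwards with n
          apply ENNReal.ofReal_le_ofReal
          apply sum_lower (g τ) (h0 τ (hsub hτ)) ε A hε hA _ _ n
          · intro δ hδ hδε
            exact (hN δ hδ hδε).trans (hmono δ hδ 0 τ le_rfl (hsub hτ).1 (hsub hτ).2)
          · exact fun ε hε => (hK ε hε).1 τ (hsub hτ)
  have hfat : ENNReal.ofReal (c * N0 (g s) ε ^ 2) * ENNReal.ofReal (t - s) ≤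
      ENNReal.ofReal (2 * N0 (g t) ε) := by
    calc _ = ∫⁻ τ in Ioc s t, ENNReal.ofReal (c * N0 (g s) ε ^ 2) := by
          rw [setLIntegral_const, Real.volume_Ioc]
      _ ≤ ∫⁻ τ in Ioc s t, Filter.liminf (fun n => ENNReal.ofReal (f n τ)) Filter.atTop :=
          lintegral_mono_ae ((ae_restrict_mem measurableSet_Ioc).mono hlim)
      _ ≤ Filter.liminf (fun n => ∫⁻ τ in Ioc s t, ENNReal.ofReal (f n τ)) Filter.atTop :=
          lintegral_liminf_le' fun n => (hfi n).aemeasurable.ennreal_ofReal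
      _ ≤ Filter.liminf (fun _ : ℕ => ENNReal.ofReal (2 * N0 (g t) ε)) Filter.atTop := by
          refine Filter.liminf_le_liminf ?_
          filter_upwards with n using hl n
      _ = _ := by simp
  rw [← ENNReal.ofReal_mul (by positivity),
    ENNReal.ofReal_le_ofReal_iff (mul_nonneg zero_le_two (N0_nonneg _ _))] at hfat
  have : (t - s) * (3 / 131072 * A / Real.sqrt ε) * N0 (g s) ε ^ 2 =
      (c * N0 (g s) ε ^ 2 * (t - s)) / 2 := by rw [hc]; ring
  linarith

/-- Quadratic growth on `[0,T]` forces `T κ y(0) ≤ 4`. -/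
lemma blowup (y : ℝ → ℝ) (T κ B : ℝ) (hκ : 0 < κ) (hy0 : 0 < y 0)
    (hstep : ∀ s t, 0 ≤ s → s < t → t ≤ T → (t - s) * κ * y s ^ 2 ≤ y t)
    (hB : ∀ t, 0 ≤ t → t ≤ T → y t ≤ B) : T * κ * y 0 ≤ 4 := by
  by_contra! hcon
  set L := 4 / (κ * y 0) with hL
  have hLp : 0 < L := by positivity
  have hLT : L ≤ T := by
    rw [hL, div_le_iff₀ (by positivity)]; linarith
  have hLe : L * κ * y 0 = 4 := by rw [hL]; field_simp
  have key : ∀ j : ℕ, 2 ^ j * y 0 ≤ y (L * (1 - (1 / 2) ^ j)) := by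
    intro j
    induction j with
    | zero => simp
    | succ j ih =>
      have hq : (0:ℝ) < (1 / 2) ^ j := by positivity
      have hq1 : (1 / 2 : ℝ) ^ j ≤ 1 := pow_le_one₀ (by norm_num) (by norm_num)
      have h := hstep (L * (1 - (1 / 2) ^ j)) (L * (1 - (1 / 2) ^ (j+1)))
        (mul_nonneg hLp.le (by linarith))
        (by apply mul_lt_mul_of_pos_left _ hLp; rw [pow_succ]; linarith)
        (by refine le_trans ?_ hLT
            have : (0:ℝ) < (1 / 2) ^ (j+1) := by positivity
            nlinarith)
      refine le_trans ?_ h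
      have hd : L * (1 - (1 / 2) ^ (j+1)) - L * (1 - (1 / 2) ^ j) = L * ((1 / 2) ^ j / 2) := by
        rw [pow_succ]; ring
      rw [hd]
      have h2 : (2 ^ j * y 0) ^ 2 ≤ y (L * (1 - (1 / 2) ^ j)) ^ 2 :=
        pow_le_pow_left₀ (by positivity) ih 2
      have hqq : (1 / 2 : ℝ) ^ j * 2 ^ j = 1 := by rw [← mul_pow]; norm_num
      calc (2:ℝ) ^ (j+1) * y 0 = 4 * ((1 / 2 : ℝ) ^ j * 2 ^ j) * 2 ^ j * y 0 / 2 := by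
            rw [hqq, pow_succ]; ring
        _ = (L * κ * y 0) * ((1 / 2 : ℝ) ^ j * 2 ^ j) * 2 ^ j * y 0 / 2 := by rw [hLe]
        _ = L * ((1 / 2) ^ j / 2) * κ * (2 ^ j * y 0) ^ 2 := by ring
        _ ≤ _ := by gcongr
  obtain ⟨n, hn⟩ := pow_unbounded_of_one_lt (B / y 0) (by norm_num : (1:ℝ) < 2)
  rw [div_lt_iff₀ hy0] at hn
  have hq : (0:ℝ) < (1 / 2) ^ n := by positivity
  have hq1 : (1 / 2 : ℝ) ^ n ≤ 1 := pow_le_one₀ (by norm_num) (by norm_num)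
  have := hB (L * (1 - (1 / 2) ^ n)) (mul_nonneg hLp.le (by linarith)) (by nlinarith)
  linarith [key n]

lemma N0e_eq (g : Measure ℝ) [IsFiniteMeasure g] (ε : ℝ) (hε : 0 < ε) :
    N0e g ε = ENNReal.ofReal (N0 g ε) := by
  unfold N0e N0
  rw [ofReal_integral_eq_lintegral_ofReal (N0_integrable g ε hε)]
  exact Filter.Eventually.of_forall fun _ => sq_nonneg _

lemma Nalpha_eq (g : Measure ℝ) [IsFiniteMeasure g] (ε : ℝ) (hε : 0 < ε) :
    NalphaE g (1/2) ε = ENNReal.ofReal (N0 g ε / Real.sqrt ε) := by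
  unfold NalphaE
  rw [N0e_eq g ε hε, ← ENNReal.ofReal_mul (by positivity), Real.rpow_neg hε.le,
    ← Real.sqrt_eq_rpow]
  congr 1
  ring

theorem stmt4 : ∃ C : ℝ, 0 < C ∧
    ∀ (T : ℝ), 0 < T → ∀ g : ℝ → Measure ℝ,
    (∀ t ∈ Icc (0:ℝ) T, IsFiniteMeasure (g t)) →
    (∀ t ∈ Icc (0:ℝ) T, g t (Iio (0:ℝ)) = 0) →
    (∀ t ∈ Icc (0:ℝ) T, g t univ = g 0 univ) →
    (∀ t ∈ Icc (0:ℝ) T, g t ({0} : Set ℝ) = 0) →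
    (∀ ε : ℝ, 0 < ε →
      (∀ τ ∈ Icc (0:ℝ) T, Integrable (wkeKernel ε)
        (((g τ).prod ((g τ).prod (g τ))).restrict
          ((Ioi (0:ℝ)) ×ˢ ((Ioi (0:ℝ)) ×ˢ (Ioi (0:ℝ)))))) ∧
      IntegrableOn (fun τ => Kcoll (g τ) ε) (Icc (0:ℝ) T) ∧
      (∀ s t : ℝ, 0 ≤ s → s < t → t ≤ T →
        N0 (g t) ε - N0 (g s) ε = ∫ τ in s..t, Kcoll (g τ) ε)) →
    uNlim (g 0) (1/2) = 0 ∨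
      oNlim (g 0) (1/2) ≤ ENNReal.ofReal C / (ENNReal.ofReal T * uNlim (g 0) (1/2)) := by
  refine ⟨524288 / 3, by norm_num, ?_⟩
  intro T hT g hfin _ hmass h0 hK
  right
  have hmono : ∀ ε, 0 < ε → ∀ s t, 0 ≤ s → s ≤ t → t ≤ T → N0 (g s) ε ≤ N0 (g t) ε := by
    intro ε hε s t hs hst ht
    rcases hst.eq_or_lt with rfl | hlt
    · exact le_rfl
    have h := (hK ε hε).2.2 s t hs hlt ht
    have : 0 ≤ ∫ τ in s..t, Kcoll (g τ) ε := by
      apply intervalIntegral.integral_nonneg hst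
      intro τ hτ
      have hm : τ ∈ Icc 0 T := ⟨hs.trans hτ.1, hτ.2.trans ht⟩
      have := hfin τ hm
      exact K_nonneg _ ε hε ((hK ε hε).1 τ hm)
    linarith
  have hz : (0:ℝ) ∈ Icc 0 T := ⟨le_rfl, hT.le⟩
  have := hfin 0 hz
  rw [ENNReal.le_div_iff_mul_le (Or.inr (by simp)) (Or.inr ENNReal.ofReal_ne_top)]
  have main : ∀ ε0 : ℝ, 0 < ε0 → ∀ ε ∈ Ioc 0 ε0,
      NalphaE (g 0) (1/2) ε * (ENNReal.ofReal T * uNe (g 0) (1/2) ε0) ≤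
        ENNReal.ofReal (524288 / 3) := by
    intro ε0 hε0 ε hε
    have hu : ∀ δ ∈ Ioc 0 ε0, uNe (g 0) (1/2) ε0 ≤ ENNReal.ofReal (N0 (g 0) δ / Real.sqrt δ) := by
      intro δ hδ
      rw [← Nalpha_eq _ _ hδ.1]
      exact iInf₂_le δ hδ
    have hfinu : uNe (g 0) (1/2) ε0 ≠ ⊤ := ne_top_of_le_ne_top ENNReal.ofReal_ne_top (hu ε hε)
    obtain ⟨A, hA, hAe⟩ : ∃ A : ℝ, 0 ≤ A ∧ uNe (g 0) (1/2) ε0 = ENNReal.ofReal A :=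
      ⟨_, ENNReal.toReal_nonneg, (ENNReal.ofReal_toReal hfinu).symm⟩
    have hN : ∀ δ, 0 < δ → δ ≤ ε → A * Real.sqrt δ ≤ N0 (g 0) δ := by
      intro δ hδ hδε
      have h := hu δ ⟨hδ, hδε.trans hε.2⟩
      have sp := Real.sqrt_pos.2 hδ
      rw [hAe, ENNReal.ofReal_le_ofReal_iff (div_nonneg (N0_nonneg _ _) sp.le)] at h
      exact (le_div_iff₀ sp).1 h
    have sp := Real.sqrt_pos.2 hε.1
    have hq := div_nonneg (N0_nonneg (g 0) ε) sp.le
    rw [Nalpha_eq _ _ hε.1, hAe, ← ENNReal.ofReal_mul hT.le, ← ENNReal.ofReal_mul hq]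
    apply ENNReal.ofReal_le_ofReal
    rcases hA.eq_or_lt with rfl | hApos
    · norm_num
    have hy0 : 0 < N0 (g 0) ε := lt_of_lt_of_le (by positivity) (hN ε hε.1 le_rfl)
    have hb := blowup (fun t => N0 (g t) ε) T (3 / 131072 * A / Real.sqrt ε) ((g 0).real univ)
      (by positivity) hy0
      (fun s t hs hst ht => step T g hfin h0 hK hmono ε A hε.1 hA hN s t hs hst ht)
      (by
        intro t ht0 htT
        have hm : t ∈ Icc 0 T := ⟨ht0, htT⟩
        have := hfin t hm
        refine (N0_le (g t) (h0 t hm) ε hε.1).trans ?_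
        refine (measureReal_mono (subset_univ _)).trans (le_of_eq ?_)
        rw [measureReal_def, measureReal_def, hmass t hm])
    have e : N0 (g 0) ε / Real.sqrt ε * (T * A) =
        131072 / 3 * (T * (3 / 131072 * A / Real.sqrt ε) * N0 (g 0) ε) := by ring
    rw [e]
    linarith
  have h1 : ∀ ε0 : ℝ, 0 < ε0 → oNlim (g 0) (1/2) * (ENNReal.ofReal T * uNe (g 0) (1/2) ε0) ≤
      ENNReal.ofReal (524288 / 3) := by
    intro ε0 hε0
    calc _ ≤ oNe (g 0) (1/2) ε0 * (ENNReal.ofReal T * uNe (g 0) (1/2) ε0) := by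
          gcongr
          exact iInf₂_le ε0 hε0
      _ ≤ _ := by
          unfold oNe
          simp only [ENNReal.iSup_mul]
          exact iSup₂_le fun ε hε => main ε0 hε0 ε hε
  unfold uNlim
  simp only [ENNReal.mul_iSup]
  exact iSup₂_le h1
end

section
/- Let C₀ > 0 and let K : ℝ → ℝ be twice continuously differentiable on ℝ∖{0} such that: |K(x)| + |K'(x)| + |K''(x)| ≤ C₀ (1+|x|) e^{x} for x ≤ −2; |K(x)| + |K'(x)| + |K''(x)| ≤ C₀ (1+|x|) e^{−5x/2} for x ≥ 2; |K(x) − π |x|^{−1/2}| ≤ C₀ |x|^{1/2} and |K'(x) + (π/2) sign(x) |x|^{−3/2}| ≤ C₀ |x|^{−1/2} for 0 < |x| ≤ 2. For ξ ∈ ℂ with Im ξ ∈ (−1, 5/2) the integral K̂(ξ) = ∫_ℝ K(x) e^{−ixξ} dx converges absolutely, and for every compact interval I ⊂ (−1, 5/2) there exists C_I > 0 such that |K̂(ξ) − π √(2π) ξ^{−1/2}| ≤ C_I |ξ|^{−1} for all ξ ∈ ℂ with Im ξ ∈ I and Re ξ ≥ 1, where ξ^{−1/2} denotes the principal branch. 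-/
open MeasureTheory Set

lemma sqrt_aux (u w : ℂ) (hu : 0 ≤ u.re) (hw : 0 ≤ w.re) (hw0 : w ≠ 0) (h : u^2 = 4 + w^2)
    (hr : 3/2 ≤ (u^2).re) : ‖u⁻¹ - w⁻¹‖ ≤ 16 * (‖w‖^2)⁻¹ := by
  have hre : 1 ≤ u.re := by
    simp [sq] at hr
    nlinarith [mul_self_nonneg u.im]
  have hu0 : u ≠ 0 := by rintro rfl; simp at hre; linarith
  have h1 : 1 ≤ ‖u + w‖ := by
    have := Complex.re_le_norm (u+w)
    simp at this; linarith
  have huw : u + w ≠ 0 := by intro h; rw [h] at h1; simp at h1; linarith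
  have hun : 1 ≤ ‖u‖ := hre.trans (Complex.re_le_norm u)
  have h2 : ‖w‖ ^ 2 ≤ ‖u‖^2 + 4 := by
    have : w^2 = u^2 - 4 := by rw [h]; ring
    rw [← norm_pow, this, ← norm_pow]
    refine (norm_sub_le _ _).trans ?_
    simp
  have hwn : 0 < ‖w‖ := norm_pos_iff.2 hw0
  have h3 : ‖w‖ ≤ 4 * ‖u‖ := by nlinarith
  have e : u⁻¹ - w⁻¹ = -4 / (u * w * (u + w)) := by
    field_simp
    linear_combination -h
  rw [e, norm_div, norm_mul, norm_mul, norm_neg, ← div_eq_mul_inv]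
  have : ‖(4:ℂ)‖ = 4 := by simp
  rw [this, div_le_div_iff₀ (by positivity) (by positivity)]
  have : ‖u‖ * ‖w‖ ≤ ‖u‖ * ‖w‖ * ‖u+w‖ := le_mul_of_one_le_right (by positivity) h1
  nlinarith

lemma cpow_half_sq (z : ℂ) : (z ^ (1/2 : ℂ))^2 = z := by

  simp

lemma cpow_half_re (z : ℂ) : 0 ≤ (z ^ (1/2 : ℂ)).re := by
  by_cases h : z = 0
  · simp [h]
  have := Complex.abs_arg_le_pi z
  rw [Complex.cpow_def_of_ne_zero h, Complex.exp_re]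
  apply mul_nonneg (Real.exp_pos _).le
  apply Real.cos_nonneg_of_mem_Icc
  have e : (Complex.log z * (1/2)).im = z.arg / 2 := by
    rw [show Complex.log z * (1/2) = Complex.log z / (2:ℝ) by push_cast; ring, Complex.div_ofReal_im, Complex.log_im]
  rw [e]
  rw [abs_le] at this
  constructor <;> linarith

lemma cpow_asym (ξ : ℂ) (h1 : 1 ≤ ξ.re) (h2 : -1 < ξ.im) (h3 : ξ.im < 5/2) :
    ‖((4 + Complex.I * ξ) ^ (1/2 : ℂ))⁻¹ + ((4 + -(Complex.I * ξ)) ^ (1/2 : ℂ))⁻¹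
      - (Real.sqrt 2 : ℂ) * ξ ^ (-(1/2) : ℂ)‖ ≤ 32 * ‖ξ‖⁻¹ := by
  set q := ξ ^ (1/2 : ℂ) with hq
  have hq2 : q^2 = ξ := cpow_half_sq ξ
  have hqr : 0 ≤ q.re := cpow_half_re ξ
  have hξ : ξ ≠ 0 := by rintro rfl; simp at h1; linarith
  have hq0 : q ≠ 0 := by intro h; rw [h] at hq2; simp at hq2; exact hξ hq2.symm
  have hre : q.re^2 - q.im^2 = ξ.re := by rw [← hq2]; simp [sq]
  have habs : |q.im| ≤ q.re := abs_le_of_sq_le_sq (by linarith) hqr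
  rw [abs_le] at habs
  set s : ℝ := Real.sqrt 2 with hs
  have hs2 : s^2 = 2 := Real.sq_sqrt (by norm_num)
  have hs0 : 0 < s := Real.sqrt_pos.2 (by norm_num)
  have hsc : (s:ℂ)^2 = 2 := by exact_mod_cast hs2
  have hsc0 : (s:ℂ) ≠ 0 := by exact_mod_cast hs0.ne'
  have I2 := Complex.I_sq
  have hI1 : (1 + Complex.I) ≠ 0 := by intro h; have := congrArg Complex.re h; simp at this
  have hI2 : (1 - Complex.I) ≠ 0 := by intro h; have := congrArg Complex.re h; simp at this
  set w : ℂ := (s:ℂ)⁻¹ * ((1 + Complex.I) * q) with hw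
  set w' : ℂ := (s:ℂ)⁻¹ * ((1 - Complex.I) * q) with hw'
  have hsc2 : (s:ℂ)⁻¹^2 = 1/2 := by rw [inv_pow, hsc]; norm_num
  have hwsq : w^2 = Complex.I * ξ := by
    rw [hw, mul_pow, hsc2, mul_pow, hq2]
    linear_combination (1/2) * ξ * I2
  have hwsq' : w'^2 = -(Complex.I * ξ) := by
    rw [hw', mul_pow, hsc2, mul_pow, hq2]
    linear_combination (1/2) * ξ * I2
  have hn : ‖w‖^2 = ‖ξ‖ := by rw [← norm_pow, hwsq]; simp
  have hn' : ‖w'‖^2 = ‖ξ‖ := by rw [← norm_pow, hwsq']; simp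
  have hwr : 0 ≤ w.re := by
    rw [hw, ← Complex.ofReal_inv, Complex.re_ofReal_mul]
    apply mul_nonneg (by positivity); simp; linarith
  have hwr' : 0 ≤ w'.re := by
    rw [hw', ← Complex.ofReal_inv, Complex.re_ofReal_mul]
    apply mul_nonneg (by positivity); simp; linarith
  have hw0 : w ≠ 0 := by simp [hw, hsc0, hI1, hq0]
  have hw0' : w' ≠ 0 := by simp [hw', hsc0, hI2, hq0]
  have A := sqrt_aux ((4 + Complex.I * ξ) ^ (1/2 : ℂ)) w (cpow_half_re _) hwr hw0
    (by rw [cpow_half_sq, hwsq]) (by rw [cpow_half_sq]; simp; linarith)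
  have B := sqrt_aux ((4 + -(Complex.I * ξ)) ^ (1/2 : ℂ)) w' (cpow_half_re _) hwr' hw0'
    (by rw [cpow_half_sq, hwsq']) (by rw [cpow_half_sq]; simp; linarith)
  rw [hn] at A
  rw [hn'] at B
  have e : (s:ℂ) * ξ ^ (-(1/2) : ℂ) = w⁻¹ + w'⁻¹ := by
    rw [Complex.cpow_neg, ← hq, hw, hw']
    field_simp
    linear_combination (-1) * I2
  rw [e]
  calc _ = ‖(((4 + Complex.I * ξ) ^ (1/2 : ℂ))⁻¹ - w⁻¹) + (((4 + -(Complex.I * ξ)) ^ (1/2 : ℂ))⁻¹ - w'⁻¹)‖ := by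
        congr 1; ring
    _ ≤ _ := (norm_add_le _ _).trans (by linarith)

lemma gint {r : ℂ} (hr : 0 < r.re) :
    IntegrableOn (fun x : ℝ => ((x ^ (-(1/2) : ℝ) : ℝ) : ℂ) * Complex.exp (-(r * x))) (Ioi 0) ∧ 
    ∫ x : ℝ in Ioi 0, ((x ^ (-(1/2) : ℝ) : ℝ) : ℂ) * Complex.exp (-(r * x)) = 
      (Real.sqrt Real.pi : ℂ) * (r ^ (1/2 : ℂ))⁻¹ := by
  constructor
  · have := integrableOn_rpow_mul_exp_neg_mul_rpow (p := 1) (s := -(1/2)) (b := r.re) (by norm_num) one_pos hr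
    refine Integrable.mono' this ?_ ?_
    · apply Measurable.aestronglyMeasurable
      fun_prop
    · refine (ae_restrict_iff' measurableSet_Ioi).2 (Filter.Eventually.of_forall fun x hx => ?_)
      have hx : 0 < x := hx
      rw [norm_mul, Complex.norm_real, Complex.norm_exp, Real.norm_of_nonneg (by positivity)]
      simp
  · have := integral_comp_rpow_Ioi_of_pos (g := fun x : ℝ => ((x ^ (-(1/2) : ℝ) : ℝ) : ℂ) * Complex.exp (-(r * x))) (p := 2) two_pos
    rw [← this]
    have e : ∀ x ∈ Ioi (0:ℝ), (2 * x ^ ((2:ℝ)-1)) • ((((x^(2:ℝ)) ^ (-(1/2) : ℝ) : ℝ) : ℂ) * Complex.exp (-(r * (x^(2:ℝ) : ℝ))))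
       = 2 * Complex.exp (- r * x^2) := by
      intro x hx
      have hx : 0 < x := hx
      rw [← Real.rpow_mul hx.le]
      norm_num
      rw [Real.rpow_neg_one]
      push_cast
      have : (x:ℂ) ≠ 0 := by exact_mod_cast hx.ne'
      field_simp
    rw [setIntegral_congr_fun measurableSet_Ioi e, integral_const_mul, integral_gaussian_complex_Ioi hr]
    have harg : r.arg ≠ Real.pi := by
      intro h
      rw [Complex.arg_eq_pi_iff] at h
      linarith [h.1]
    have hr0 : r ≠ 0 := by rintro rfl; simp at hr
    have hp0 : (Real.pi : ℂ) ≠ 0 := by exact_mod_cast Real.pi_ne_zero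
    have hm : ((Real.pi : ℂ) * r⁻¹) ^ (1/2 : ℂ) = (Real.sqrt Real.pi : ℂ) * r⁻¹ ^ (1/2 : ℂ) := by
      rw [Complex.cpow_def_of_ne_zero (mul_ne_zero hp0 (inv_ne_zero hr0)),
        Complex.cpow_def_of_ne_zero (inv_ne_zero hr0), Complex.log_ofReal_mul Real.pi_pos (inv_ne_zero hr0),
        add_mul, Complex.exp_add, Real.sqrt_eq_rpow, Real.rpow_def_of_pos Real.pi_pos]
      push_cast
      rfl
    rw [div_eq_mul_inv (Real.pi : ℂ), hm, Complex.inv_cpow _ _ harg]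
    ring

lemma half (A C₀ c : ℝ) (hA : A ≤ 5/2) (hA0 : 0 < A) (hcA : c < A) (hC₀ : 0 < C₀) (L L' : ℝ → ℝ)
    (hd : ∀ x, 0 < x → HasDerivAt L (L' x) x) (hc : ContinuousOn L' (Ioi 0))
    (hinf : ∀ x, 2 ≤ x → |L x| + |L' x| ≤ C₀ * (1 + x) * Real.exp (-(A * x)))
    (h0 : ∀ x, 0 < x → x ≤ 2 → |L x - Real.pi * x ^ (-(1/2) : ℝ)| ≤ C₀ * x ^ ((1/2) : ℝ))
    (h0' : ∀ x, 0 < x → x ≤ 2 → |L' x + Real.pi / 2 * x ^ (-(3/2) : ℝ)| ≤ C₀ * x ^ (-(1/2) : ℝ)) :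
    ∃ M : ℝ, 0 ≤ M ∧ ∀ ζ : ℂ, -c ≤ ζ.re →
      IntegrableOn (fun x : ℝ => (L x : ℂ) * Complex.exp (-(ζ * x))) (Ioi 0) ∧
      (ζ ≠ 0 → ‖(∫ x : ℝ in Ioi 0, (L x : ℂ) * Complex.exp (-(ζ * x))) -
        Real.pi * ((Real.sqrt Real.pi : ℂ) * ((4 + ζ) ^ (1/2 : ℂ))⁻¹)‖ ≤ M * ‖ζ‖⁻¹) := by
  have hpi := Real.pi_pos
  -- the regular part
  set R : ℝ → ℝ := fun x => L x - Real.pi * (x ^ (-(1/2) : ℝ) * Real.exp (-(4 * x))) with hR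
  set R' : ℝ → ℝ := fun x => L' x + Real.pi / 2 * x ^ (-(3/2) : ℝ) * Real.exp (-(4 * x))
    + 4 * Real.pi * (x ^ (-(1/2) : ℝ) * Real.exp (-(4 * x))) with hR'
  have hRd : ∀ x, 0 < x → HasDerivAt R (R' x) x := by
    intro x hx
    have h1 : HasDerivAt (fun x : ℝ => x ^ (-(1/2) : ℝ)) (-(1/2) * x ^ (-(1/2) - 1 : ℝ)) x :=
      Real.hasDerivAt_rpow_const (Or.inl hx.ne')
    have h2 : HasDerivAt (fun x : ℝ => Real.exp (-(4 * x))) (Real.exp (-(4 * x)) * (-(4 * 1))) x :=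
      (((hasDerivAt_id x).const_mul 4).neg).exp
    have h3 := (hd x hx).sub ((h1.mul h2).const_mul Real.pi)
    refine h3.congr_deriv ?_
    simp only [hR']
    rw [show (-(1/2) - 1 : ℝ) = -(3/2) by norm_num]
    ring
  have hR'c : ContinuousOn R' (Ioi 0) := by
    have hp : ∀ s : ℝ, ContinuousOn (fun x : ℝ => x ^ s) (Ioi 0) := fun s x hx =>
      (Real.continuousAt_rpow_const x s (Or.inl (ne_of_gt hx))).continuousWithinAt
    have he : ContinuousOn (fun x : ℝ => Real.exp (-(4 * x))) (Ioi 0) := by fun_prop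
    exact (hc.add ((continuousOn_const.mul (hp _)).mul he)).add (continuousOn_const.mul ((hp _).mul he))
  have hRc : ContinuousOn R (Ioi 0) := fun x hx => (hRd x hx).continuousAt.continuousWithinAt
  have hexp : ∀ x : ℝ, 0 < x → 0 ≤ 1 - Real.exp (-(4 * x)) ∧ 1 - Real.exp (-(4*x)) ≤ 4 * x := by
    intro x hx
    refine ⟨by simp [hx.le], by linarith [Real.add_one_le_exp (-(4*x))]⟩
  have hpw : ∀ x : ℝ, 0 < x → x ^ (-(1/2) : ℝ) * x = x ^ (1/2 : ℝ) ∧ x ^ (-(3/2) : ℝ) * x = x ^ (-(1/2) : ℝ) := by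
    intro x hx
    constructor
    · rw [← Real.rpow_add_one hx.ne']; norm_num
    · rw [← Real.rpow_add_one hx.ne']; norm_num
  have hRs : ∀ x, 0 < x → x ≤ 2 → |R x| ≤ (C₀ + 4 * Real.pi) * x ^ (1/2 : ℝ) := by
    intro x hx hx2
    have e : R x = (L x - Real.pi * x ^ (-(1/2) : ℝ)) + Real.pi * x ^ (-(1/2) : ℝ) * (1 - Real.exp (-(4*x))) := by
      simp only [hR]; ring
    rw [e]
    refine (abs_add_le _ _).trans ?_
    have h1 := h0 x hx hx2
    obtain ⟨h2, h3⟩ := hexp x hx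
    have hp : 0 < x ^ (-(1/2) : ℝ) := by positivity
    rw [abs_of_nonneg (a := Real.pi * x ^ (-(1/2) : ℝ) * (1 - Real.exp (-(4*x)))) (by positivity)]
    have h4 : Real.pi * x ^ (-(1/2) : ℝ) * (1 - Real.exp (-(4*x))) ≤ Real.pi * x ^ (-(1/2) : ℝ) * (4 * x) := by
      gcongr
    have h5 := (hpw x hx).1
    have h6 : Real.pi * x ^ (-(1/2) : ℝ) * (4 * x) = 4 * Real.pi * x ^ (1/2 : ℝ) := by rw [← h5]; ring
    linarith
  have hRs' : ∀ x, 0 < x → x ≤ 2 → |R' x| ≤ (C₀ + 6 * Real.pi) * x ^ (-(1/2) : ℝ) := by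
    intro x hx hx2
    have e : R' x = (L' x + Real.pi / 2 * x ^ (-(3/2) : ℝ)) +
      (4 * Real.pi * x ^ (-(1/2) : ℝ) * Real.exp (-(4 * x)) - Real.pi / 2 * x ^ (-(3/2) : ℝ) * (1 - Real.exp (-(4*x)))) := by
      simp only [hR']; ring
    rw [e]
    refine (abs_add_le _ _).trans ?_
    refine (add_le_add_right (abs_sub _ _) _).trans ?_
    have h1 := h0' x hx hx2
    obtain ⟨h2, h3⟩ := hexp x hx
    have hp : 0 < x ^ (-(1/2) : ℝ) := by positivity
    have hp3 : 0 < x ^ (-(3/2) : ℝ) := by positivity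
    rw [abs_of_nonneg (a := Real.pi / 2 * x ^ (-(3/2) : ℝ) * (1 - Real.exp (-(4*x)))) (by positivity),
      abs_of_nonneg (a := 4 * Real.pi * x ^ (-(1/2) : ℝ) * Real.exp (-(4 * x))) (by positivity)]
    have h4 : Real.pi / 2 * x ^ (-(3/2) : ℝ) * (1 - Real.exp (-(4*x))) ≤ Real.pi / 2 * x ^ (-(3/2) : ℝ) * (4 * x) := by
      gcongr
    have h5 := (hpw x hx).2
    have h6 : Real.pi / 2 * x ^ (-(3/2) : ℝ) * (4 * x) = 2 * Real.pi * x ^ (-(1/2) : ℝ) := by rw [← h5]; ring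
    have h7 : 4 * Real.pi * x ^ (-(1/2) : ℝ) * Real.exp (-(4 * x)) ≤ 4 * Real.pi * x ^ (-(1/2) : ℝ) * 1 := by
      gcongr; linarith
    linarith
  -- unified bound
  set D : ℝ → ℝ := fun x => x ^ (-(1/2) : ℝ) + x ^ (3/2 : ℝ) with hD
  set B : ℝ := 2 * (C₀ + 6 * Real.pi) * Real.exp (2 * A) with hB
  have hexp2 : 1 ≤ Real.exp (2 * A) := Real.one_le_exp (by linarith)
  have hB0 : 0 < B := by positivity
  have small : ∀ x, 0 < x → x ≤ 2 → 2 * (C₀ + 6 * Real.pi) * x ^ (-(1/2) : ℝ) ≤ B * (D x * Real.exp (-(A * x))) := by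
    intro x hx hx2
    have h1 : 1 ≤ Real.exp (2 * A) * Real.exp (-(A * x)) := by
      rw [← Real.exp_add]; apply Real.one_le_exp; nlinarith
    have hp : 0 < x ^ (-(1/2) : ℝ) := by positivity
    have hp3 : 0 < x ^ ((3/2) : ℝ) := by positivity
    have hh : B * (D x * Real.exp (-(A * x))) = 2 * (C₀ + 6 * Real.pi) * D x * (Real.exp (2 * A) * Real.exp (-(A * x))) := by
      simp only [hB]; ring
    rw [hh]
    calc 2 * (C₀ + 6 * Real.pi) * x ^ (-(1/2) : ℝ) ≤ 2 * (C₀ + 6 * Real.pi) * D x := by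
          gcongr; simp only [hD]; linarith
      _ ≤ _ := le_mul_of_one_le_right (by positivity) h1
  have large : ∀ x, 2 ≤ x → (C₀ + 6 * Real.pi) * ((1 + x) * Real.exp (-(A * x))) ≤ B * (D x * Real.exp (-(A * x))) := by
    intro x hx
    have hx0 : 0 < x := by linarith
    have hp : 0 < x ^ (-(1/2) : ℝ) := by positivity
    have h1 : x ≤ x ^ (3/2 : ℝ) := by
      conv_lhs => rw [← Real.rpow_one x]
      exact Real.rpow_le_rpow_of_exponent_le (by linarith) (by norm_num)
    have h2 : 1 + x ≤ 2 * D x := by simp only [hD]; linarith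
    have h3 : 2 * (C₀ + 6 * Real.pi) ≤ B := le_mul_of_one_le_right (by positivity) hexp2
    have hDp : 0 < D x := by linarith
    calc _ ≤ (C₀ + 6 * Real.pi) * ((2 * D x) * Real.exp (-(A * x))) := by gcongr
      _ = 2 * (C₀ + 6 * Real.pi) * (D x * Real.exp (-(A * x))) := by ring
      _ ≤ _ := by gcongr
  have hexp4 : ∀ x, 2 ≤ x → x ^ (-(1/2) : ℝ) * Real.exp (-(4 * x)) ≤ (1 + x) * Real.exp (-(A * x)) ∧
      x ^ (-(3/2) : ℝ) * Real.exp (-(4 * x)) ≤ (1 + x) * Real.exp (-(A * x)) := by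
    intro x hx
    have hx0 : 0 < x := by linarith
    have h1 : Real.exp (-(4 * x)) ≤ Real.exp (-(A * x)) := Real.exp_le_exp.2 (by nlinarith)
    have h2 : ∀ s : ℝ, s ≤ 0 → x ^ s ≤ 1 + x := fun s hs =>
      (Real.rpow_le_one_of_one_le_of_nonpos (by linarith) hs).trans (by linarith)
    constructor
    · exact mul_le_mul (h2 _ (by norm_num)) h1 (by positivity) (by positivity)
    · exact mul_le_mul (h2 _ (by norm_num)) h1 (by positivity) (by positivity)
  have bR : ∀ x, 0 < x → |R x| ≤ B * (D x * Real.exp (-(A * x))) := by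
    intro x hx
    rcases le_total x 2 with h | h
    · refine le_trans ?_ (small x hx h)
      refine (hRs x hx h).trans ?_
      have hp : 0 < x ^ (-(1/2) : ℝ) := by positivity
      rw [← (hpw x hx).1]
      have h1 : x ^ (-(1/2) : ℝ) * x ≤ x ^ (-(1/2) : ℝ) * 2 := by gcongr
      calc _ ≤ (C₀ + 4 * Real.pi) * (x ^ (-(1/2) : ℝ) * 2) := by gcongr
        _ ≤ (C₀ + 6 * Real.pi) * (x ^ (-(1/2) : ℝ) * 2) := by gcongr; norm_num
        _ = _ := by ring
    · refine le_trans ?_ (large x h)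
      simp only [hR]
      refine (abs_sub _ _).trans ?_
      have h1 := hinf x h
      have h2 := (hexp4 x h).1
      rw [abs_of_nonneg (a := Real.pi * (x ^ (-(1/2) : ℝ) * Real.exp (-(4 * x)))) (by positivity)]
      have h3 := mul_le_mul_of_nonneg_left h2 hpi.le
      have h4 : 0 ≤ Real.pi * ((1 + x) * Real.exp (-(A * x))) := by positivity
      linarith [abs_nonneg (L' x)]
  have bR' : ∀ x, 0 < x → |R' x| ≤ B * (D x * Real.exp (-(A * x))) := by
    intro x hx
    rcases le_total x 2 with h | h
    · refine le_trans ?_ (small x hx h)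
      refine (hRs' x hx h).trans ?_
      gcongr
      linarith
    · refine le_trans ?_ (large x h)
      simp only [hR']
      refine (abs_add_le _ _).trans ?_
      refine (add_le_add_left (abs_add_le _ _) _).trans ?_
      have h1 := hinf x h
      have h2 := hexp4 x h
      rw [abs_of_nonneg (a := 4 * Real.pi * (x ^ (-(1/2) : ℝ) * Real.exp (-(4 * x)))) (by positivity),
        abs_of_nonneg (a := Real.pi / 2 * x ^ (-(3/2) : ℝ) * Real.exp (-(4 * x))) (by positivity)]
      have h3 := mul_le_mul_of_nonneg_left h2.1 hpi.le
      have h3' := mul_le_mul_of_nonneg_left h2.2 hpi.le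
      have h4 : 0 ≤ Real.pi * ((1 + x) * Real.exp (-(A * x))) := by positivity
      linarith [abs_nonneg (L x)]
  -- dominating function
  set G : ℝ → ℝ := fun x => B * (D x * Real.exp (-((A - c) * x))) with hG
  have hGi : IntegrableOn G (Ioi 0) := by
    have h1 := integrableOn_rpow_mul_exp_neg_mul_rpow (p := 1) (s := -(1/2)) (b := A - c) (by norm_num) one_pos (by linarith)
    have h2 := integrableOn_rpow_mul_exp_neg_mul_rpow (p := 1) (s := 3/2) (b := A - c) (by norm_num) one_pos (by linarith)
    refine ((h1.add h2).const_mul B).congr ?_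
    refine Filter.Eventually.of_forall fun x => ?_
    simp only [hG, hD, Pi.add_apply, Real.rpow_one, neg_mul]
    ring
  refine ⟨∫ x in Ioi 0, G x, setIntegral_nonneg measurableSet_Ioi ?_, ?_⟩
  · intro x hx
    have hx : 0 < x := hx
    simp only [hG, hD]
    positivity
  intro ζ hζ
  have dom : ∀ S : ℝ → ℝ, (∀ x, 0 < x → |S x| ≤ B * (D x * Real.exp (-(A * x)))) → ∀ x ∈ Ioi (0:ℝ),
      ‖(S x : ℂ) * Complex.exp (-(ζ * x))‖ ≤ G x := by
    intro S hS x hx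
    have hx : 0 < x := hx
    rw [norm_mul, Complex.norm_real, Complex.norm_exp, Real.norm_eq_abs]
    have h1 : (-(ζ * x)).re ≤ c * x := by
      simp; nlinarith
    have hDp : 0 < D x := by simp only [hD]; positivity
    calc _ ≤ B * (D x * Real.exp (-(A * x))) * Real.exp (c * x) := by
          gcongr; exact hS x hx
      _ = B * (D x * (Real.exp (-(A * x)) * Real.exp (c * x))) := by ring
      _ = _ := by rw [← Real.exp_add]; simp only [hG]; congr 3; ring
  have hint : ∀ S : ℝ → ℝ, ContinuousOn S (Ioi 0) → (∀ x, 0 < x → |S x| ≤ B * (D x * Real.exp (-(A * x)))) →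
      IntegrableOn (fun x : ℝ => (S x : ℂ) * Complex.exp (-(ζ * x))) (Ioi 0) := by
    intro S hSc hS
    refine Integrable.mono' hGi ?_ ((ae_restrict_iff' measurableSet_Ioi).2 (Filter.Eventually.of_forall (dom S hS)))
    refine ContinuousOn.aestronglyMeasurable ?_ measurableSet_Ioi
    exact (Complex.continuous_ofReal.comp_continuousOn hSc).mul (by fun_prop)
  have iR := hint R hRc bR
  have iR' := hint R' hR'c bR'
  obtain ⟨gi, ge⟩ := gint (r := 4 + ζ) (by simp; linarith)
  have esplit : ∀ x : ℝ, (L x : ℂ) * Complex.exp (-(ζ * x)) = (R x : ℂ) * Complex.exp (-(ζ * x))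
      + Real.pi * (((x ^ (-(1/2) : ℝ) : ℝ) : ℂ) * Complex.exp (-((4 + ζ) * x))) := by
    intro x
    simp only [hR]
    rw [show -((4 + ζ) * x) = -(4 * (x:ℂ)) + -(ζ * x) by ring, Complex.exp_add]
    push_cast
    ring
  refine ⟨?_, ?_⟩
  · simp_rw [esplit]
    exact iR.add (gi.const_mul _)
  intro hζ0
  simp_rw [esplit]
  rw [integral_add iR (gi.const_mul _), integral_const_mul, ge, add_sub_cancel_right]
  -- integration by parts
  set F : ℝ → ℂ := fun x => (R x : ℂ) * Complex.exp (-(ζ * x)) with hF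
  have hFd : ∀ x ∈ Ioi (0:ℝ), HasDerivAt F ((R' x : ℂ) * Complex.exp (-(ζ * x)) - ζ * ((R x : ℂ) * Complex.exp (-(ζ * x)))) x := by
    intro x hx
    have h1 := (hRd x hx).ofReal_comp
    have h2 : HasDerivAt (fun x : ℝ => Complex.exp (-(ζ * x))) (Complex.exp (-(ζ * x)) * (-(ζ * 1))) x :=
      (((hasDerivAt_id x).ofReal_comp.const_mul ζ).neg).cexp
    refine (h1.mul h2).congr_deriv ?_
    ring
  have hFi : IntegrableOn (fun x : ℝ => (R' x : ℂ) * Complex.exp (-(ζ * x)) - ζ * ((R x : ℂ) * Complex.exp (-(ζ * x)))) (Ioi 0) :=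
    iR'.sub (iR.const_mul ζ)
  have hlim := tendsto_zero_of_hasDerivAt_of_integrableOn_Ioi hFd hFi iR
  have hlim0 : Filter.Tendsto F (nhdsWithin 0 (Ioi 0)) (nhds 0) := by
    have hR0 : Filter.Tendsto R (nhdsWithin 0 (Ioi 0)) (nhds 0) := by
      have h1 : Filter.Tendsto (fun x : ℝ => (C₀ + 4 * Real.pi) * x ^ (1/2 : ℝ)) (nhdsWithin 0 (Ioi 0)) (nhds 0) := by
        have : ContinuousAt (fun x : ℝ => (C₀ + 4 * Real.pi) * x ^ (1/2 : ℝ)) 0 :=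
          continuousAt_const.mul (Real.continuousAt_rpow_const 0 _ (Or.inr (by norm_num)))
        have h := this.tendsto
        simp at h
        simpa using h.mono_left nhdsWithin_le_nhds
      refine squeeze_zero_norm' ?_ h1
      filter_upwards [Ioo_mem_nhdsGT (show (0:ℝ) < 2 by norm_num)] with x hx
      exact hRs x hx.1 hx.2.le
    have h2 : Filter.Tendsto (fun x : ℝ => Complex.exp (-(ζ * x))) (nhdsWithin 0 (Ioi 0)) (nhds (Complex.exp (-(ζ * (0:ℝ))))) := by
      apply Filter.Tendsto.mono_left _ nhdsWithin_le_nhds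
      apply Continuous.tendsto
      fun_prop
    have h3 := ((Complex.continuous_ofReal.tendsto 0).comp hR0).mul h2
    simpa using h3
  have hibp := integral_Ioi_of_hasDerivAt_of_tendsto (f := Function.update F 0 0) (a := 0) (m := 0)
    (f' := fun x : ℝ => (R' x : ℂ) * Complex.exp (-(ζ * x)) - ζ * ((R x : ℂ) * Complex.exp (-(ζ * x))))
    (by
      rw [continuousWithinAt_update_same]
      simpa using hlim0)
    (by
      intro x hx
      have hx' : (0:ℝ) < x := hx
      refine (hFd x hx).congr_of_eventuallyEq ?_
      filter_upwards [Ioi_mem_nhds hx'] with y hy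
      exact Function.update_of_ne (ne_of_gt hy) _ _)
    hFi
    (by
      refine hlim.congr' ?_
      filter_upwards [Filter.eventually_gt_atTop (0:ℝ)] with y hy
      exact (Function.update_of_ne (ne_of_gt hy) _ _).symm)
  rw [Function.update_self, sub_zero, integral_sub iR' (iR.const_mul ζ), integral_const_mul, sub_eq_zero] at hibp
  have hn : ‖ζ‖ * ‖∫ x in Ioi (0:ℝ), (R x : ℂ) * Complex.exp (-(ζ * x))‖ ≤ ∫ x in Ioi 0, G x := by
    rw [← norm_mul, ← hibp]
    exact norm_integral_le_of_norm_le hGi ((ae_restrict_iff' measurableSet_Ioi).2 (Filter.Eventually.of_forall (dom R' bR')))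
  rw [← div_eq_mul_inv, le_div_iff₀ (norm_pos_iff.2 hζ0), mul_comm]
  exact hn

theorem stmt9 (C₀ : ℝ) (hC₀ : 0 < C₀) (K : ℝ → ℝ)
    (hsm : ContDiffOn ℝ 2 K ({(0:ℝ)}ᶜ))
    (hneg : ∀ x : ℝ, x ≤ -2 →
      |K x| + |deriv K x| + |deriv (deriv K) x| ≤ C₀ * (1 + |x|) * Real.exp x)
    (hpos : ∀ x : ℝ, 2 ≤ x →
      |K x| + |deriv K x| + |deriv (deriv K) x| ≤ C₀ * (1 + |x|) * Real.exp (-(5 * x) / 2))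
    (h0 : ∀ x : ℝ, x ≠ 0 → |x| ≤ 2 →
      |K x - Real.pi * |x| ^ (-(1/2) : ℝ)| ≤ C₀ * |x| ^ ((1/2) : ℝ) ∧
      |deriv K x + Real.pi / 2 * Real.sign x * |x| ^ (-(3/2) : ℝ)| ≤
        C₀ * |x| ^ (-(1/2) : ℝ)) :
    -- the Fourier–Laplace transform converges absolutely in the strip `Im ξ ∈ (-1, 5/2)`
    (∀ ξ : ℂ, ξ.im ∈ Ioo (-1 : ℝ) (5/2) →
      Integrable (fun x : ℝ => (K x : ℂ) * Complex.exp (-(Complex.I * x * ξ)))) ∧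
    -- the asymptotic expansion `K̂(ξ) = π √(2π) ξ^{-1/2} + O(|ξ|⁻¹)`
    (∀ a b : ℝ, a ≤ b → Icc a b ⊆ Ioo (-1 : ℝ) (5/2) →
      ∃ C_I : ℝ, 0 < C_I ∧ ∀ ξ : ℂ, ξ.im ∈ Icc a b → 1 ≤ ξ.re →
        ‖(∫ x : ℝ, (K x : ℂ) * Complex.exp (-(Complex.I * x * ξ))) -
            (Real.pi * Real.sqrt (2 * Real.pi) : ℂ) * ξ ^ (-(1/2) : ℂ)‖ ≤
          C_I * ‖ξ‖⁻¹) := by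

  have hnb : ∀ x : ℝ, x ≠ 0 → ({(0:ℝ)}ᶜ : Set ℝ) ∈ nhds x := fun x hx => isOpen_compl_singleton.mem_nhds hx
  have hKd : ∀ x : ℝ, x ≠ 0 → HasDerivAt K (deriv K x) x := fun x hx =>
    ((hsm.differentiableOn (by norm_num)).differentiableAt (hnb x hx)).hasDerivAt
  have hKc : ContinuousOn (deriv K) ({(0:ℝ)}ᶜ) :=
    hsm.continuousOn_deriv_of_isOpen isOpen_compl_singleton (by norm_num)
  have HP : ∀ c : ℝ, c < 5/2 → _ := fun c hc =>
    half (5/2) C₀ c le_rfl (by norm_num) hc hC₀ K (deriv K) (fun x hx => hKd x hx.ne')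
      (hKc.mono fun x hx => ne_of_gt hx)
      (by
        intro x hx
        have := hpos x hx
        rw [abs_of_nonneg (a := x) (by linarith), show -(5 * x) / 2 = -(5/2 * x) by ring] at this
        linarith [abs_nonneg (deriv (deriv K) x)])
      (by
        intro x hx hx2
        have := (h0 x hx.ne' (by rwa [abs_of_pos hx])).1
        rwa [abs_of_pos hx] at this)
      (by
        intro x hx hx2
        have := (h0 x hx.ne' (by rwa [abs_of_pos hx])).2
        rwa [abs_of_pos hx, Real.sign_of_pos hx, mul_one] at this)
  have HN : ∀ c : ℝ, c < 1 → _ := fun c hc =>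
    half 1 C₀ c (by norm_num) (by norm_num) hc hC₀ (fun x => K (-x)) (fun x => - deriv K (-x))
      (fun x hx => by
        have := (hKd (-x) (by linarith)).comp x (hasDerivAt_neg x)
        exact this.congr_deriv (by ring))
      (by
        apply ContinuousOn.neg
        refine hKc.comp (by fun_prop) ?_
        intro x hx
        have hx : 0 < x := hx
        simp [hx.ne'])
      (by
        intro x hx
        have := hneg (-x) (by linarith)
        rw [abs_neg x, abs_of_nonneg (a := x) (by linarith)] at this
        rw [abs_neg, one_mul]
        linarith [abs_nonneg (deriv (deriv K) (-x))])
      (by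
        intro x hx hx2
        have := (h0 (-x) (by linarith) (by rwa [abs_neg, abs_of_pos hx])).1
        rwa [abs_neg, abs_of_pos hx] at this)
      (by
        intro x hx hx2
        have := (h0 (-x) (by linarith) (by rwa [abs_neg, abs_of_pos hx])).2
        rw [abs_neg, abs_of_pos hx, Real.sign_of_neg (by linarith), ← abs_neg] at this
        convert this using 2
        ring)
  -- gluing of the two half lines
  have glue : ∀ ξ : ℂ,
      IntegrableOn (fun x : ℝ => (K x : ℂ) * Complex.exp (-(Complex.I * ξ * x))) (Ioi 0) →
      IntegrableOn (fun x : ℝ => (K (-x) : ℂ) * Complex.exp (-(-(Complex.I * ξ) * x))) (Ioi 0) →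
      Integrable (fun x : ℝ => (K x : ℂ) * Complex.exp (-(Complex.I * x * ξ))) ∧
      ∫ x : ℝ, (K x : ℂ) * Complex.exp (-(Complex.I * x * ξ)) =
        (∫ x : ℝ in Ioi 0, (K x : ℂ) * Complex.exp (-(Complex.I * ξ * x))) +
        ∫ x : ℝ in Ioi 0, (K (-x) : ℂ) * Complex.exp (-(-(Complex.I * ξ) * x)) := by
    intro ξ h1 h2
    set f : ℝ → ℂ := fun x : ℝ => (K x : ℂ) * Complex.exp (-(Complex.I * x * ξ)) with hf
    have e1 : (fun x : ℝ => (K x : ℂ) * Complex.exp (-(Complex.I * ξ * x))) = f := by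
      funext x; simp only [hf]; congr 2; ring
    have e2 : (fun x : ℝ => (K (-x) : ℂ) * Complex.exp (-(-(Complex.I * ξ) * x))) = fun x => f (-x) := by
      funext x; simp only [hf]; congr 2; push_cast; ring
    rw [e1] at h1 ⊢
    rw [e2] at h2 ⊢
    have h3 : IntegrableOn f (Iic 0) := by
      have h4 : IntegrableOn (fun x => f (-x)) (Ici 0) := (integrableOn_Ici_iff_integrableOn_Ioi (by simp)).2 h2
      have h5 := IntegrableOn.comp_neg_Iic (c := (0:ℝ)) (f := fun x => f (-x)) (μ := volume) (by simpa using h4)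
      simpa using h5
    refine ⟨?_, ?_⟩
    · rw [← integrableOn_univ, ← Iic_union_Ioi (a := (0:ℝ))]
      exact h3.union h1
    · rw [integral_comp_neg_Ioi, neg_zero, add_comm, intervalIntegral.integral_Iic_add_Ioi h3 h1]
  constructor
  · intro ξ hξ
    obtain ⟨M, -, hM⟩ := HP ξ.im hξ.2
    obtain ⟨N, -, hN⟩ := HN (-ξ.im) (by linarith [hξ.1])
    exact (glue ξ (hM (Complex.I * ξ) (by simp)).1 (hN (-(Complex.I * ξ)) (by simp)).1).1
  · intro a b hab hI
    have ha := hI (left_mem_Icc.2 hab)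
    have hb := hI (right_mem_Icc.2 hab)
    obtain ⟨M, hM0, hM⟩ := HP b hb.2
    obtain ⟨N, hN0, hN⟩ := HN (-a) (by linarith [ha.1])
    have hpi := Real.pi_pos
    refine ⟨M + N + Real.pi * Real.sqrt Real.pi * 32, by positivity, ?_⟩
    intro ξ hξ h1
    have hξ0 : Complex.I * ξ ≠ 0 := by
      apply mul_ne_zero Complex.I_ne_zero
      rintro rfl; simp at h1; linarith
    obtain ⟨m1, m2⟩ := hM (Complex.I * ξ) (by simp; exact hξ.2)
    obtain ⟨n1, n2⟩ := hN (-(Complex.I * ξ)) (by simp; exact hξ.1)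
    have m3 := m2 hξ0
    have n3 := n2 (neg_ne_zero.2 hξ0)
    rw [(glue ξ m1 n1).2]
    have k := cpow_asym ξ h1 (hI hξ).1 (hI hξ).2
    have en : ‖Complex.I * ξ‖ = ‖ξ‖ := by simp
    rw [en] at m3
    rw [norm_neg, en] at n3
    rw [Real.sqrt_mul (by norm_num : (0:ℝ) ≤ 2)]
    set J1 := ∫ x : ℝ in Ioi 0, (K x : ℂ) * Complex.exp (-(Complex.I * ξ * x))
    set J2 := ∫ x : ℝ in Ioi 0, (K (-x) : ℂ) * Complex.exp (-(-(Complex.I * ξ) * x))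
    set p1 := ((4 + Complex.I * ξ) ^ (1/2 : ℂ))⁻¹
    set p2 := ((4 + -(Complex.I * ξ)) ^ (1/2 : ℂ))⁻¹
    have e : J1 + J2 - (Real.pi * ((Real.sqrt 2 * Real.sqrt Real.pi : ℝ) : ℂ)) * ξ ^ (-(1/2) : ℂ)
      = (J1 - Real.pi * ((Real.sqrt Real.pi : ℂ) * p1)) + (J2 - Real.pi * ((Real.sqrt Real.pi : ℂ) * p2))
        + ((Real.pi * Real.sqrt Real.pi : ℝ) : ℂ) * (p1 + p2 - (Real.sqrt 2 : ℂ) * ξ ^ (-(1/2) : ℂ)) := by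
      push_cast; ring
    rw [e]
    refine (norm_add₃_le).trans ?_
    rw [norm_mul, Complex.norm_real, Real.norm_of_nonneg (by positivity)]
    have k2 := mul_le_mul_of_nonneg_left k (show 0 ≤ Real.pi * Real.sqrt Real.pi by positivity)
    calc _ ≤ M * ‖ξ‖⁻¹ + N * ‖ξ‖⁻¹ + Real.pi * Real.sqrt Real.pi * (32 * ‖ξ‖⁻¹) := by
          gcongr
      _ = _ := by ring
end

section
/- Let C₀ > 0 and let K : ℝ → ℝ be twice continuously differentiable on ℝ∖{0} such that: |K(x)| + |K'(x)| + |K''(x)| ≤ C₀ (1+|x|) e^{x} for x ≤ −2; |K(x)| + |K'(x)| + |K''(x)| ≤ C₀ (1+|x|) e^{−5x/2} for x ≥ 2; |K(x) − π |x|^{−1/2}| ≤ C₀ |x|^{1/2} and |K'(x) + (π/2) sign(x) |x|^{−3/2}| ≤ C₀ |x|^{−1/2} for 0 < |x| ≤ 2. Define K̂(ξ) = ∫_ℝ K(x) e^{−ixξ} dx for Im ξ ∈ (−1, 5/2). Then for every compact interval I ⊂ (−1, 5/2) there exists C_I > 0 such that |K̂(ξ)| ≤ C_I (1 + |ξ|)^{−1/2}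 for all ξ ∈ ℂ with Im ξ ∈ I. -/
open MeasureTheory Set

lemma half_core (K : ℝ → ℝ) (M δ d : ℝ) (hM : 0 < M) (hδ : 0 < δ)
    (hd : ∀ x : ℝ, 0 < x → DifferentiableAt ℝ K x)
    (h1 : ∀ x : ℝ, 0 < x → |K x| * Real.exp (d * x) ≤ M * (x ^ (-(1/2) : ℝ) * Real.exp (-δ * x)))
    (h2 : ∀ x : ℝ, 0 < x → |deriv K x| * Real.exp (d * x) ≤ M * x ^ (-(3/2) : ℝ)) :
    ∃ C : ℝ, 0 < C ∧ ∀ z : ℂ, z.re ≤ d →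
      IntegrableOn (fun x : ℝ => (K x : ℂ) * Complex.exp (z * x)) (Ioi 0) ∧
      ‖∫ x in Ioi (0:ℝ), (K x : ℂ) * Complex.exp (z * x)‖ ≤ C * (1 + ‖z‖) ^ (-(1/2) : ℝ) := by
  have hgi : IntegrableOn (fun x : ℝ => M * (x ^ (-(1/2) : ℝ) * Real.exp (-δ * x))) (Ioi 0) := by
    have := integrableOn_rpow_mul_exp_neg_mul_rpow (p := 1) (s := -(1/2)) (b := δ)
      (by norm_num) one_pos hδ
    simp only [Real.rpow_one] at this
    exact this.const_mul M
  set A := ∫ x in Ioi (0:ℝ), M * (x ^ (-(1/2) : ℝ) * Real.exp (-δ * x)) with hA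
  have hA0 : 0 ≤ A := by
    refine setIntegral_nonneg measurableSet_Ioi fun x hx => ?_
    have : (0:ℝ) < x := hx
    positivity
  refine ⟨2 * (A + 5 * M), by positivity, fun z hz => ?_⟩
  have hexp : ∀ x : ℝ, 0 < x → ‖Complex.exp (z * x)‖ ≤ Real.exp (d * x) := by
    intro x hx
    rw [Complex.norm_exp]
    simp only [Complex.mul_re, Complex.ofReal_re, Complex.ofReal_im, mul_zero, sub_zero]
    gcongr
  have hb : ∀ x : ℝ, 0 < x → ‖(K x : ℂ) * Complex.exp (z * x)‖ ≤
      M * (x ^ (-(1/2) : ℝ) * Real.exp (-δ * x)) := by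
    intro x hx
    rw [norm_mul, Complex.norm_real, Real.norm_eq_abs]
    exact (mul_le_mul_of_nonneg_left (hexp x hx) (abs_nonneg _)).trans (h1 x hx)
  have hb' : ∀ x : ℝ, 0 < x → ‖(K x : ℂ) * Complex.exp (z * x)‖ ≤ M * x ^ (-(1/2) : ℝ) := by
    intro x hx
    refine (hb x hx).trans ?_
    have : Real.exp (-δ * x) ≤ 1 := Real.exp_le_one_iff.2 (by nlinarith)
    have h3 : 0 < x ^ (-(1/2) : ℝ) := Real.rpow_pos_of_pos hx _
    gcongr
    nlinarith
  have hb2 : ∀ x : ℝ, 0 < x → ‖((deriv K x : ℝ) : ℂ) * Complex.exp (z * x)‖ ≤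
      M * x ^ (-(3/2) : ℝ) := by
    intro x hx
    rw [norm_mul, Complex.norm_real, Real.norm_eq_abs]
    exact (mul_le_mul_of_nonneg_left (hexp x hx) (abs_nonneg _)).trans (h2 x hx)
  have hcont : ContinuousOn (fun x : ℝ => (K x : ℂ) * Complex.exp (z * x)) (Ioi 0) := by
    have hK : ContinuousOn K (Ioi 0) := fun x hx => (hd x hx).continuousAt.continuousWithinAt
    have : ContinuousOn (fun x : ℝ => (K x : ℂ)) (Ioi 0) :=
      Complex.continuous_ofReal.comp_continuousOn hK
    exact this.mul (by fun_prop)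
  have hKint : IntegrableOn (fun x : ℝ => (K x : ℂ) * Complex.exp (z * x)) (Ioi 0) := by
    refine Integrable.mono' hgi (hcont.aestronglyMeasurable measurableSet_Ioi) ?_
    exact (ae_restrict_iff' measurableSet_Ioi).2 (Filter.Eventually.of_forall fun x hx => hb x hx)
  refine ⟨hKint, ?_⟩
  have htriv : ‖∫ x in Ioi (0:ℝ), (K x : ℂ) * Complex.exp (z * x)‖ ≤ A := by
    refine norm_integral_le_of_norm_le hgi ?_
    exact (ae_restrict_iff' measurableSet_Ioi).2 (Filter.Eventually.of_forall fun x hx => hb x hx)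
  have h2pow : (1/2 : ℝ) ≤ (2:ℝ) ^ (-(1/2) : ℝ) := by
    have : (2:ℝ) ^ (-1 : ℝ) ≤ (2:ℝ) ^ (-(1/2) : ℝ) :=
      Real.rpow_le_rpow_of_exponent_le (by norm_num) (by norm_num)
    rw [Real.rpow_neg_one] at this
    linarith
  rcases le_total ‖z‖ 1 with hz1 | hz1
  · have : (2:ℝ) ^ (-(1/2) : ℝ) ≤ (1 + ‖z‖) ^ (-(1/2) : ℝ) :=
      Real.rpow_le_rpow_of_nonpos (by positivity) (by linarith) (by norm_num)
    nlinarith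
  · have hz0 : 0 < ‖z‖ := by linarith
    have hzne : z ≠ 0 := norm_pos_iff.1 hz0
    have hcmp : (2:ℝ) ^ (-(1/2) : ℝ) * ‖z‖ ^ (-(1/2) : ℝ) ≤ (1 + ‖z‖) ^ (-(1/2) : ℝ) := by
      rw [← Real.mul_rpow (by norm_num) hz0.le]
      exact Real.rpow_le_rpow_of_nonpos (by positivity) (by linarith) (by norm_num)
    set e : ℝ := ‖z‖⁻¹ with he
    have he0 : 0 < e := inv_pos.2 hz0
    have hs : e ^ ((1/2) : ℝ) = ‖z‖ ^ (-(1/2) : ℝ) := by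
      rw [he, Real.inv_rpow hz0.le, Real.rpow_neg hz0.le]
    have hs2 : e ^ (-(1/2) : ℝ) = ‖z‖ * ‖z‖ ^ (-(1/2) : ℝ) := by
      rw [he, Real.inv_rpow hz0.le, ← Real.rpow_neg hz0.le]
      nth_rewrite 2 [← Real.rpow_one ‖z‖]
      rw [← Real.rpow_add hz0]; norm_num
    set P := ‖z‖ ^ (-(1/2) : ℝ) with hP
    have hP0 : 0 < P := Real.rpow_pos_of_pos hz0 _
    have hsplit : (∫ x in Ioi (0:ℝ), (K x : ℂ) * Complex.exp (z * x)) =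
        (∫ x in Ioc (0:ℝ) e, (K x : ℂ) * Complex.exp (z * x)) +
        ∫ x in Ioi e, (K x : ℂ) * Complex.exp (z * x) := by
      rw [← setIntegral_union Ioc_disjoint_Ioi_same measurableSet_Ioi
        (hKint.mono_set Ioc_subset_Ioi_self) (hKint.mono_set (Ioi_subset_Ioi he0.le)),
        Ioc_union_Ioi_eq_Ioi he0.le]
    have hI1 : ‖∫ x in Ioc (0:ℝ) e, (K x : ℂ) * Complex.exp (z * x)‖ ≤ 2 * M * P := by
      have hi : IntegrableOn (fun x : ℝ => M * x ^ (-(1/2) : ℝ)) (Ioc 0 e) := by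
        have := intervalIntegral.intervalIntegrable_rpow' (a := 0) (b := e) (r := -(1/2))
          (by norm_num)
        exact ((intervalIntegrable_iff_integrableOn_Ioc_of_le he0.le).1 this).const_mul M
      refine (norm_integral_le_of_norm_le hi ((ae_restrict_iff' measurableSet_Ioc).2
        (Filter.Eventually.of_forall fun x hx => hb' x hx.1))).trans ?_
      rw [integral_const_mul, ← intervalIntegral.integral_of_le he0.le,
        integral_rpow (Or.inl (by norm_num))]
      norm_num
      norm_num at hs
      rw [hs]
      linarith
    have hi3 : IntegrableOn (fun x : ℝ => M * x ^ (-(3/2) : ℝ)) (Ioi e) :=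
      (integrableOn_Ioi_rpow_of_lt (by norm_num) he0).const_mul M
    have hae3 : ∀ᵐ x ∂(volume.restrict (Ioi e)),
        ‖((deriv K x : ℝ) : ℂ) * Complex.exp (z * x)‖ ≤ M * x ^ (-(3/2) : ℝ) :=
      (ae_restrict_iff' measurableSet_Ioi).2
        (Filter.Eventually.of_forall fun x hx => hb2 x (he0.trans hx))
    have hKint' : IntegrableOn (fun x : ℝ => ((deriv K x : ℝ) : ℂ) * Complex.exp (z * x))
        (Ioi e) := by
      refine Integrable.mono' hi3 ?_ hae3
      refine Measurable.aestronglyMeasurable ?_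
      exact (Complex.measurable_ofReal.comp (measurable_deriv K)).mul (by fun_prop)
    have hI3 : ‖∫ x in Ioi e, ((deriv K x : ℝ) : ℂ) * Complex.exp (z * x)‖ ≤
        2 * M * (‖z‖ * P) := by
      refine (norm_integral_le_of_norm_le hi3 hae3).trans ?_
      rw [integral_const_mul, integral_Ioi_rpow_of_lt (by norm_num) he0, ← hs2]
      norm_num
      linarith
    have hinte := hKint.mono_set (Ioi_subset_Ioi he0.le)
    have hder : ∀ x ∈ Ici e, HasDerivAt (fun x : ℝ => (K x : ℂ) * Complex.exp (z * x))
        (((deriv K x : ℝ) : ℂ) * Complex.exp (z * x) +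
          z * ((K x : ℂ) * Complex.exp (z * x))) x := by
      intro x hx
      have hx0 : 0 < x := he0.trans_le hx
      have a1 : HasDerivAt (fun x : ℝ => (K x : ℂ)) ((deriv K x : ℝ) : ℂ) x :=
        (hd x hx0).hasDerivAt.ofReal_comp
      have a2 : HasDerivAt (fun x : ℝ => z * (x : ℂ)) (z * 1) x :=
        (Complex.ofRealCLM.hasDerivAt (x := x)).const_mul z
      refine (a1.mul a2.cexp).congr_deriv ?_
      ring
    have htend : Filter.Tendsto (fun x : ℝ => (K x : ℂ) * Complex.exp (z * x)) Filter.atTop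
        (nhds 0) := by
      have t : Filter.Tendsto (fun x : ℝ => M * x ^ (-(1/2) : ℝ)) Filter.atTop (nhds 0) := by
        simpa using (tendsto_rpow_neg_atTop (y := 1/2) (by norm_num)).const_mul M
      refine squeeze_zero_norm' ?_ t
      filter_upwards [Filter.eventually_gt_atTop 0] with x hx using hb' x hx
    have hftc := integral_Ioi_of_hasDerivAt_of_tendsto' hder
      (hKint'.add (hinte.const_mul z)) htend
    rw [integral_add hKint' (hinte.const_mul z), integral_const_mul] at hftc
    have hI2 : ‖∫ x in Ioi e, (K x : ℂ) * Complex.exp (z * x)‖ ≤ 3 * M * P := by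
      have e1 : z * (∫ x in Ioi e, (K x : ℂ) * Complex.exp (z * x)) =
          -((K e : ℂ) * Complex.exp (z * e)) -
          ∫ x in Ioi e, ((deriv K x : ℝ) : ℂ) * Complex.exp (z * x) := by
        linear_combination hftc
      have e2 : ‖z‖ * ‖∫ x in Ioi e, (K x : ℂ) * Complex.exp (z * x)‖ ≤
          ‖z‖ * (3 * M * P) := by
        rw [← norm_mul, e1]
        refine (norm_sub_le _ _).trans ?_
        rw [norm_neg]
        have := hb' e he0
        rw [hs2] at this
        linarith
      exact le_of_mul_le_mul_left e2 hz0
    rw [hsplit]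
    refine (norm_add_le _ _).trans ?_
    have : 1/2 * P ≤ (1 + ‖z‖) ^ (-(1/2) : ℝ) := by nlinarith
    nlinarith

lemma half_line (K : ℝ → ℝ) (C₀ C₁ r d : ℝ) (hC₀ : 0 < C₀) (hC₁ : 0 < C₁) (hdr : d < r)
    (hd : ∀ x : ℝ, 0 < x → DifferentiableAt ℝ K x)
    (h1 : ∀ x : ℝ, 2 ≤ x → |K x| + |deriv K x| ≤ C₀ * (1 + x) * Real.exp (-r * x))
    (h2 : ∀ x : ℝ, 0 < x → x ≤ 2 → |K x| ≤ C₁ * x ^ (-(1/2) : ℝ) ∧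
      |deriv K x| ≤ C₁ * x ^ (-(3/2) : ℝ)) :
    ∃ C : ℝ, 0 < C ∧ ∀ z : ℂ, z.re ≤ d →
      IntegrableOn (fun x : ℝ => (K x : ℂ) * Complex.exp (z * x)) (Ioi 0) ∧
      ‖∫ x in Ioi (0:ℝ), (K x : ℂ) * Complex.exp (z * x)‖ ≤ C * (1 + ‖z‖) ^ (-(1/2) : ℝ) := by
  obtain ⟨k, hk, hkr⟩ : ∃ k : ℝ, 0 < k ∧ d + 2 * k = r := ⟨(r - d) / 2, by linarith, by ring⟩
  -- small part constant and large part constant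
  set B₁ := C₁ * Real.exp (2 * |d + k|) with hB₁
  set B₂ := C₀ * (6 / k ^ 3 * Real.exp k) with hB₂
  have hB₁0 : 0 < B₁ := by positivity
  have hB₂0 : 0 < B₂ := by positivity
  -- key: large `x`
  have hlarge : ∀ x : ℝ, 2 ≤ x → (|K x| + |deriv K x|) * Real.exp (d * x) ≤
      B₂ * (x ^ (-(3/2) : ℝ) * Real.exp (-k * x)) := by
    intro x hx
    have hx0 : 0 < x := by linarith
    have e1 : (1 + x) ^ 3 ≤ 6 / k ^ 3 * Real.exp k * Real.exp (k * x) := by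
      have := Real.pow_div_factorial_le_exp (k * (1 + x)) (by positivity) 3
      rw [mul_add, mul_one, Real.exp_add] at this
      have h6 : ((Nat.factorial 3 : ℕ) : ℝ) = 6 := by norm_num [Nat.factorial]
      rw [h6] at this
      calc (1 + x) ^ 3 = 6 / k ^ 3 * ((k + k * x) ^ 3 / 6) := by field_simp
        _ ≤ 6 / k ^ 3 * (Real.exp k * Real.exp (k * x)) := by gcongr
        _ = _ := by ring
    have e2 : x ^ ((3/2) : ℝ) ≤ (1 + x) ^ 2 := by
      calc x ^ ((3/2) : ℝ) ≤ x ^ (2 : ℝ) :=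
            Real.rpow_le_rpow_of_exponent_le (by linarith) (by norm_num)
        _ = x ^ 2 := Real.rpow_two x
        _ ≤ (1 + x) ^ 2 := by gcongr; linarith
    have hp : 0 < x ^ ((3/2) : ℝ) := Real.rpow_pos_of_pos hx0 _
    have e3 : 1 + x ≤ 6 / k ^ 3 * Real.exp k * Real.exp (k * x) * x ^ (-(3/2) : ℝ) := by
      rw [Real.rpow_neg hx0.le, ← div_eq_mul_inv, le_div_iff₀ hp]
      calc (1 + x) * x ^ ((3/2) : ℝ) ≤ (1 + x) * (1 + x) ^ 2 := by gcongr
        _ = (1 + x) ^ 3 := by ring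
        _ ≤ _ := e1
    calc (|K x| + |deriv K x|) * Real.exp (d * x)
        ≤ C₀ * (1 + x) * Real.exp (-r * x) * Real.exp (d * x) := by
          gcongr; exact h1 x hx
      _ ≤ C₀ * (6 / k ^ 3 * Real.exp k * Real.exp (k * x) * x ^ (-(3/2) : ℝ)) *
          Real.exp (-r * x) * Real.exp (d * x) := by gcongr
      _ = B₂ * (x ^ (-(3/2) : ℝ) *
          (Real.exp (k * x) * Real.exp (-r * x) * Real.exp (d * x))) := by rw [hB₂]; ring
      _ = _ := by
          rw [← Real.exp_add, ← Real.exp_add]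
          congr 3
          rw [← hkr]; ring
  have hsm : ∀ x : ℝ, 0 < x → x ≤ 2 → C₁ * Real.exp (d * x) ≤ B₁ * Real.exp (-k * x) := by
    intro x hx hx2
    rw [hB₁, mul_assoc, ← Real.exp_add]
    gcongr
    nlinarith [le_abs_self (d + k), abs_nonneg (d + k), mul_le_mul_of_nonneg_right (le_abs_self (d+k)) hx.le]
  have hk1 : ∀ x : ℝ, 0 < x → Real.exp (-k * x) ≤ 1 := fun x hx =>
    Real.exp_le_one_iff.2 (by nlinarith)
  refine half_core K (B₁ + B₂) k d (by positivity) hk hd ?_ ?_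
  · intro x hx
    have hp : 0 < x ^ (-(1/2) : ℝ) := Real.rpow_pos_of_pos hx _
    have hq := Real.exp_pos (-k * x)
    rcases le_total x 2 with h | h
    · calc |K x| * Real.exp (d * x) ≤ C₁ * x ^ (-(1/2) : ℝ) * Real.exp (d * x) := by
            gcongr; exact (h2 x hx h).1
        _ = x ^ (-(1/2) : ℝ) * (C₁ * Real.exp (d * x)) := by ring
        _ ≤ x ^ (-(1/2) : ℝ) * (B₁ * Real.exp (-k * x)) := by gcongr x ^ (-(1/2) : ℝ) * ?_; exact hsm x hx h
        _ = B₁ * (x ^ (-(1/2) : ℝ) * Real.exp (-k * x)) := by ring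
        _ ≤ _ := by gcongr; linarith
    · have e : x ^ (-(3/2) : ℝ) ≤ x ^ (-(1/2) : ℝ) :=
        Real.rpow_le_rpow_of_exponent_le (by linarith) (by norm_num)
      calc |K x| * Real.exp (d * x) ≤ (|K x| + |deriv K x|) * Real.exp (d * x) := by
            gcongr; linarith [abs_nonneg (deriv K x)]
        _ ≤ B₂ * (x ^ (-(3/2) : ℝ) * Real.exp (-k * x)) := hlarge x h
        _ ≤ _ := by gcongr; linarith
  · intro x hx
    have hp : 0 < x ^ (-(3/2) : ℝ) := Real.rpow_pos_of_pos hx _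
    rcases le_total x 2 with h | h
    · calc |deriv K x| * Real.exp (d * x) ≤ C₁ * x ^ (-(3/2) : ℝ) * Real.exp (d * x) := by
            gcongr; exact (h2 x hx h).2
        _ = x ^ (-(3/2) : ℝ) * (C₁ * Real.exp (d * x)) := by ring
        _ ≤ x ^ (-(3/2) : ℝ) * (B₁ * Real.exp (-k * x)) := by gcongr x ^ (-(3/2) : ℝ) * ?_; exact hsm x hx h
        _ ≤ x ^ (-(3/2) : ℝ) * (B₁ * 1) := by gcongr; exact hk1 x hx
        _ = B₁ * x ^ (-(3/2) : ℝ) := by ring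
        _ ≤ _ := by gcongr; linarith
    · calc |deriv K x| * Real.exp (d * x) ≤ (|K x| + |deriv K x|) * Real.exp (d * x) := by
            gcongr; linarith [abs_nonneg (K x)]
        _ ≤ B₂ * (x ^ (-(3/2) : ℝ) * Real.exp (-k * x)) := hlarge x h
        _ ≤ B₂ * (x ^ (-(3/2) : ℝ) * 1) := by gcongr; exact hk1 x (by linarith)
        _ = B₂ * x ^ (-(3/2) : ℝ) := by ring
        _ ≤ _ := by gcongr; linarith

/-- Consequence of the bounds near zero. -/
lemma near_zero (C₀ k k' x s : ℝ) (hC₀ : 0 < C₀) (hx : 0 < x) (hx2 : x ≤ 2) (hs : |s| ≤ 1)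
    (h1 : |k - Real.pi * x ^ (-(1/2) : ℝ)| ≤ C₀ * x ^ ((1/2) : ℝ))
    (h2 : |k' + Real.pi / 2 * s * x ^ (-(3/2) : ℝ)| ≤ C₀ * x ^ (-(1/2) : ℝ)) :
    |k| ≤ (Real.pi + 2 * C₀) * x ^ (-(1/2) : ℝ) ∧
      |k'| ≤ (Real.pi + 2 * C₀) * x ^ (-(3/2) : ℝ) := by
  have e1 : x ^ ((1/2) : ℝ) = x * x ^ (-(1/2) : ℝ) := by
    nth_rewrite 2 [← Real.rpow_one x]
    rw [← Real.rpow_add hx]; norm_num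
  have e2 : x ^ (-(1/2) : ℝ) = x * x ^ (-(3/2) : ℝ) := by
    nth_rewrite 2 [← Real.rpow_one x]
    rw [← Real.rpow_add hx]; norm_num
  have p1 : 0 < x ^ (-(1/2) : ℝ) := Real.rpow_pos_of_pos hx _
  have p2 : 0 < x ^ (-(3/2) : ℝ) := Real.rpow_pos_of_pos hx _
  have hpi := Real.pi_pos
  constructor
  · rw [e1] at h1
    have : x * x ^ (-(1/2) : ℝ) ≤ 2 * x ^ (-(1/2) : ℝ) := by gcongr
    have h3 : C₀ * (x * x ^ (-(1/2) : ℝ)) ≤ C₀ * (2 * x ^ (-(1/2) : ℝ)) := by gcongr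
    have h4 : |k| ≤ |k - Real.pi * x ^ (-(1/2) : ℝ)| + |Real.pi * x ^ (-(1/2) : ℝ)| := by
      simpa using abs_add_le (k - Real.pi * x ^ (-(1/2) : ℝ)) (Real.pi * x ^ (-(1/2) : ℝ))
    rw [abs_of_pos (mul_pos hpi p1)] at h4
    linarith
  · rw [e2] at h2
    have h3 : C₀ * (x * x ^ (-(3/2) : ℝ)) ≤ C₀ * (2 * x ^ (-(3/2) : ℝ)) := by gcongr
    have h4 : |k'| ≤ |k' + Real.pi / 2 * s * x ^ (-(3/2) : ℝ)| +
        |Real.pi / 2 * s * x ^ (-(3/2) : ℝ)| := by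
      simpa using abs_sub (k' + Real.pi / 2 * s * x ^ (-(3/2) : ℝ))
        (Real.pi / 2 * s * x ^ (-(3/2) : ℝ))
    have h5 : |Real.pi / 2 * s * x ^ (-(3/2) : ℝ)| ≤ Real.pi / 2 * 1 * x ^ (-(3/2) : ℝ) := by
      rw [abs_mul, abs_mul, abs_of_pos p2, abs_of_pos (half_pos hpi)]
      gcongr
    nlinarith [mul_pos hpi p2]

theorem stmt10 (C₀ : ℝ) (hC₀ : 0 < C₀) (K : ℝ → ℝ)
    (hsm : ContDiffOn ℝ 2 K ({(0:ℝ)}ᶜ))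
    (hneg : ∀ x : ℝ, x ≤ -2 →
      |K x| + |deriv K x| + |deriv (deriv K) x| ≤ C₀ * (1 + |x|) * Real.exp x)
    (hpos : ∀ x : ℝ, 2 ≤ x →
      |K x| + |deriv K x| + |deriv (deriv K) x| ≤ C₀ * (1 + |x|) * Real.exp (-(5 * x) / 2))
    (h0 : ∀ x : ℝ, x ≠ 0 → |x| ≤ 2 →
      |K x - Real.pi * |x| ^ (-(1/2) : ℝ)| ≤ C₀ * |x| ^ ((1/2) : ℝ) ∧
      |deriv K x + Real.pi / 2 * Real.sign x * |x| ^ (-(3/2) : ℝ)| ≤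
        C₀ * |x| ^ (-(1/2) : ℝ)) :
    -- `K̂` is defined (absolutely convergent) in the strip `Im ξ ∈ (-1, 5/2)`
    (∀ ξ : ℂ, ξ.im ∈ Ioo (-1 : ℝ) (5/2) →
      Integrable (fun x : ℝ => (K x : ℂ) * Complex.exp (-(Complex.I * x * ξ)))) ∧
    -- the uniform decay estimate `|K̂(ξ)| ≤ C_I (1+|ξ|)^{-1/2}`
    (∀ a b : ℝ, a ≤ b → Icc a b ⊆ Ioo (-1 : ℝ) (5/2) →
      ∃ C_I : ℝ, 0 < C_I ∧ ∀ ξ : ℂ, ξ.im ∈ Icc a b →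
        ‖∫ x : ℝ, (K x : ℂ) * Complex.exp (-(Complex.I * x * ξ))‖ ≤
          C_I * (1 + ‖ξ‖) ^ (-(1/2) : ℝ)) := by
  have hdiff : ∀ x : ℝ, x ≠ 0 → DifferentiableAt ℝ K x := fun x hx =>
    (hsm.differentiableOn (by norm_num)).differentiableAt (isOpen_compl_singleton.mem_nhds hx)
  have hsign : ∀ x : ℝ, |Real.sign x| ≤ 1 := by
    intro x
    rcases Real.sign_apply_eq x with h | h | h <;> rw [h] <;> norm_num
  have hdneg : ∀ x : ℝ, deriv (fun y => K (-y)) x = -deriv K (-x) := fun x => deriv_comp_neg K x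
  have hR : ∀ b : ℝ, b < 5/2 → _ := fun b hb =>
    half_line K C₀ (Real.pi + 2 * C₀) (5/2) b hC₀ (by positivity) hb
      (fun x hx => hdiff x hx.ne')
      (fun x hx => by
        have := hpos x hx
        rw [abs_of_nonneg (show (0:ℝ) ≤ x by linarith),
          show -(5 * x) / 2 = -(5/2) * x by ring] at this
        linarith [abs_nonneg (deriv (deriv K) x)])
      (fun x hx hx2 => by
        have ha : |x| = x := abs_of_pos hx
        have := h0 x hx.ne' (by rw [ha]; exact hx2)
        rw [ha] at this
        exact near_zero C₀ _ _ x _ hC₀ hx hx2 (hsign x) this.1 this.2)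
  have hL : ∀ a : ℝ, -1 < a → _ := fun a ha =>
    half_line (fun y => K (-y)) C₀ (Real.pi + 2 * C₀) 1 (-a) hC₀ (by positivity) (by linarith)
      (fun x hx => (hdiff (-x) (by simpa using hx.ne')).comp x differentiableAt_id.neg)
      (fun x hx => by
        have := hneg (-x) (by linarith)
        rw [abs_neg x, abs_of_nonneg (show (0:ℝ) ≤ x by linarith)] at this
        rw [hdneg, abs_neg, neg_one_mul]
        linarith [abs_nonneg (deriv (deriv K) (-x))])
      (fun x hx hx2 => by
        have ha : |-x| = x := by rw [abs_neg]; exact abs_of_pos hx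
        have := h0 (-x) (by simpa using hx.ne') (by rw [ha]; exact hx2)
        rw [ha] at this
        have := near_zero C₀ _ _ x _ hC₀ hx hx2 (hsign (-x)) this.1 this.2
        rw [hdneg, abs_neg]
        exact this)
  have key : ∀ a b : ℝ, -1 < a → b < 5/2 → ∃ C_I : ℝ, 0 < C_I ∧ ∀ ξ : ℂ, ξ.im ∈ Icc a b →
      Integrable (fun x : ℝ => (K x : ℂ) * Complex.exp (-(Complex.I * x * ξ))) ∧
      ‖∫ x : ℝ, (K x : ℂ) * Complex.exp (-(Complex.I * x * ξ))‖ ≤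
          C_I * (1 + ‖ξ‖) ^ (-(1/2) : ℝ) := by
    intro a b ha hb
    obtain ⟨C, hC, HR⟩ := hR b hb
    obtain ⟨D, hD, HL⟩ := hL a ha
    refine ⟨C + D, by positivity, fun ξ hξ => ?_⟩
    obtain ⟨r1, r2⟩ := HR (-(Complex.I * ξ)) (by simpa using hξ.2)
    obtain ⟨l1, l2⟩ := HL (Complex.I * ξ) (by simpa using hξ.1)
    set F : ℝ → ℂ := fun x : ℝ => (K x : ℂ) * Complex.exp (-(Complex.I * x * ξ)) with hF
    have er : (fun x : ℝ => (K x : ℂ) * Complex.exp (-(Complex.I * ξ) * x)) = F := by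
      funext x; simp only [hF]; congr 2; ring
    have el : (fun x : ℝ => (K (-x) : ℂ) * Complex.exp (Complex.I * ξ * x)) =
        fun x => F (-x) := by
      funext x; simp only [hF]; congr 2; push_cast; ring
    rw [er] at r1 r2
    rw [el] at l1 l2
    rw [integral_comp_neg_Ioi, neg_zero] at l2
    have l3 : IntegrableOn F (Iic 0) := by
      have l1' : IntegrableOn (fun x => F (-x)) (Ioi (-(0:ℝ))) := by rw [neg_zero]; exact l1
      have := l1'.comp_neg_Iio
      simp only [neg_neg] at this
      exact (integrableOn_Iic_iff_integrableOn_Iio (by simp)).2 this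
    have nr : ‖-(Complex.I * ξ)‖ = ‖ξ‖ := by simp
    have nl : ‖Complex.I * ξ‖ = ‖ξ‖ := by simp
    rw [nr] at r2
    rw [nl] at l2
    have hi : Integrable F := by
      rw [← integrableOn_univ, ← Iic_union_Ioi (a := (0:ℝ))]
      exact l3.union r1
    refine ⟨hi, ?_⟩
    rw [← intervalIntegral.integral_Iic_add_Ioi l3 r1]
    refine (norm_add_le _ _).trans ?_
    linarith
  constructor
  · intro ξ hξ
    obtain ⟨C, -, h⟩ := key ξ.im ξ.im hξ.1 hξ.2
    exact (h ξ ⟨le_rfl, le_rfl⟩).1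
  · intro a b hab hI
    obtain ⟨C, hC, h⟩ := key a b (hI ⟨le_rfl, hab⟩).1 (hI ⟨hab, le_rfl⟩).2
    exact ⟨C, hC, fun ξ hξ => (h ξ hξ).2⟩
end
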